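/- For every f ∈ LlogL(-1,1), the identity f(x) − ( (1/π)∫_{-1}^1 f(t) dt )·(1-x²)^{-1/2} = T̂(T(f))(x) holds for a.e. x ∈ (-1,1). Consequently, the composed operator T̂∘T maps LlogL(-1,1) into itself and is bounded, with ‖T̂∘T‖_{LlogL→LlogL} ≤ 1 + (1/π)·‖(1-x²)^{-1/2}‖_{LlogL}. -/

import Mathlib

open MeasureTheory Set Filter

noncomputable section

/-- Lebesgue measure restricted to the interval `(-1, 1)`. -/
def μI : Measure ℝ := volume.restrict (Set.Ioo (-1 : ℝ) 1)

/-- The finite Hilbert transform: the principal-value limit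
`T(f)(t) = lim_{ε→0⁺} (1/π) ∫_{x∈(-1,1), |x-t|≥ε} f(x)/(x-t) dx`. -/
def FHT (f : ℝ → ℂ) (t : ℝ) : ℂ :=
  limUnder (nhdsWithin (0 : ℝ) (Set.Ioi 0)) fun ε : ℝ =>
    (Real.pi : ℂ)⁻¹ *
      ∫ x in {x : ℝ | x ∈ Set.Ioo (-1 : ℝ) 1 ∧ ε ≤ |x - t|}, f x / ((x : ℂ) - (t : ℂ))

/-- The operator `T̂(g)(x) = -(1-x²)^{-1/2} T(t ↦ √(1-t²) g(t))(x)`. -/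
def hatT (g : ℝ → ℂ) (x : ℝ) : ℂ :=
  -((Real.sqrt (1 - x ^ 2) : ℂ))⁻¹ * FHT (fun t => (Real.sqrt (1 - t ^ 2) : ℂ) * g t) x

/-- Membership in the Zygmund space `L log L(-1,1)`:
`f` is a.e. measurable on `(-1,1)` and `∫ |f| log⁺|f| < ∞`. -/
def MemLlogL (f : ℝ → ℂ) : Prop :=
  AEStronglyMeasurable f μI ∧
    IntegrableOn (fun x => ‖f x‖ * max (Real.log ‖f x‖) 0) (Set.Ioo (-1 : ℝ) 1)

/-- The distribution function `λ ↦ |{x ∈ (-1,1) : |f(x)| > λ}|`. -/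
def distFun (f : ℝ → ℂ) (lam : ℝ) : ℝ :=
  (volume {x : ℝ | x ∈ Set.Ioo (-1 : ℝ) 1 ∧ lam < ‖f x‖}).toReal

/-- The decreasing rearrangement `f*` of `f`, a function on `(0,2)`. -/
def decRearr (f : ℝ → ℂ) (t : ℝ) : ℝ :=
  sInf {lam : ℝ | 0 ≤ lam ∧ distFun f lam ≤ t}

/-- The `L log L` norm `‖f‖ = ∫_0^2 f*(t) log(2e/t) dt`. -/
def llogLNorm (f : ℝ → ℂ) : ℝ :=
  ∫ t in Set.Ioo (0 : ℝ) 2, decRearr f t * Real.log (2 * Real.exp 1 / t)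

/-- The `L(log L)^α` norm `∫_0^2 f*(t) log^α(2e/t) dt` (for `α = 0` this is the `L¹` norm). -/
def zygNorm (α : ℝ) (f : ℝ → ℂ) : ℝ :=
  ∫ t in Set.Ioo (0 : ℝ) 2, decRearr f t * Real.log (2 * Real.exp 1 / t) ^ α

/-- Membership in the Zygmund space `L(log L)^α(-1,1)`. -/
def MemZyg (α : ℝ) (f : ℝ → ℂ) : Prop :=
  AEStronglyMeasurable f μI ∧
    IntegrableOn (fun t => decRearr f t * Real.log (2 * Real.exp 1 / t) ^ α)
      (Set.Ioo (0 : ℝ) 2)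

/-- Membership in `L(log L)²(-1,1)`: `∫ |f| (log(2+|f|))² < ∞`. -/
def MemLlogL2 (f : ℝ → ℂ) : Prop :=
  AEStronglyMeasurable f μI ∧
    IntegrableOn (fun x => ‖f x‖ * Real.log (2 + ‖f x‖) ^ 2) (Set.Ioo (-1 : ℝ) 1)

/-- The constant `c(β,γ) = max{1/(1-β), 1/(1-γ), 1/(β+γ-1)}`. -/
def cBG (β γ : ℝ) : ℝ := max (max (1 / (1 - β)) (1 / (1 - γ))) (1 / (β + γ - 1))

open Topology

lemma μI_eq_interval (F : ℝ → ℂ) : ∫ x, F x ∂μI = ∫ x in (-1:ℝ)..1, F x := by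
  rw [intervalIntegral.integral_of_le (by norm_num), integral_Ioc_eq_integral_Ioo]; rfl

instance : IsFiniteMeasure μI := by
  unfold μI; infer_instance

/-- Cauchy transform -/
def Cz (f : ℝ → ℝ) (z : ℂ) : ℂ := ∫ x, (f x : ℂ) / ((x:ℂ) - z) ∂μI

def sqw (x : ℝ) : ℝ := Real.sqrt (1 - x^2)

lemma sqw_continuous : Continuous sqw := by unfold sqw; fun_prop

lemma exists_zeta (z : ℂ) (hz : z.im ≠ 0) : ∃ ζ : ℂ, ‖ζ‖ < 1 ∧ ζ ≠ 0 ∧ ζ^2 + 1 = 2 * z * ζ := by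
  obtain ⟨s, hs⟩ := IsAlgClosed.exists_pow_nat_eq (z^2 - 1) (n := 2) (by norm_num)
  have hp : (z - s) * (z + s) = 1 := by linear_combination -hs
  have hn : ‖z - s‖ * ‖z + s‖ = 1 := by rw [← norm_mul, hp, norm_one]
  have key : ∀ s : ℂ, s^2 = z^2 - 1 → ‖z - s‖ ≠ 1 := by
    intro s hs h1
    have hp : (z - s) * (z + s) = 1 := by linear_combination -hs
    have h2 : (z - s) * (starRingEnd ℂ) (z - s) = 1 := by
      rw [Complex.mul_conj, Complex.normSq_eq_norm_sq, h1]; simp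
    have hne : z - s ≠ 0 := by intro h; rw [h, zero_mul] at hp; exact zero_ne_one hp
    have h3 : z + s = (starRingEnd ℂ) (z - s) := mul_left_cancel₀ hne (hp.trans h2.symm)
    have h4 : 2 * z = (z - s) + (starRingEnd ℂ) (z - s) := by rw [← h3]; ring
    have := congrArg Complex.im h4
    rw [Complex.add_conj] at this
    simp at this
    exact hz this
  have a1 := key s hs
  rcases lt_or_gt_of_ne a1 with h | h
  · refine ⟨z - s, h, ?_, by linear_combination hs⟩
    intro h; rw [h, zero_mul] at hp; exact zero_ne_one hp
  · refine ⟨z + s, ?_, ?_, by linear_combination hs⟩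
    · by_contra hc
      push Not at hc
      nlinarith
    · intro h; rw [h, mul_zero] at hp; exact zero_ne_one hp

lemma one_sub_ne {ζ u : ℂ} (h : ‖ζ‖ < 1) (hu : ‖u‖ ≤ 1) : 1 - ζ * u ≠ 0 := by
  intro h0
  have : ζ * u = 1 := (sub_eq_zero.mp h0).symm
  have h2 : ‖ζ * u‖ = 1 := by rw [this, norm_one]
  rw [norm_mul] at h2
  nlinarith [norm_nonneg ζ, norm_nonneg u]

lemma B_integral (ζ : ℂ) (h : ‖ζ‖ < 1) :
    ∫ θ in (-Real.pi)..Real.pi, 1 / (1 - ζ * Complex.exp (θ * Complex.I)) = 2 * Real.pi := by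
  have hd : DiffContOnCl ℂ (fun u => 1 / (1 - ζ * u)) (Metric.ball (0:ℂ) |1|) := by
    apply DifferentiableOn.diffContOnCl
    rw [abs_one, closure_ball _ one_ne_zero]
    intro u hu
    have := one_sub_ne h (by simpa using hu)
    have hda : DifferentiableAt ℂ (fun u : ℂ => 1 - ζ * u) u := by fun_prop
    exact ((differentiableAt_const (1:ℂ)).fun_div hda this).differentiableWithinAt
  have := hd.circleAverage
  rw [Real.circleAverage_def] at this
  have hper : Function.Periodic (fun θ : ℝ => 1 / (1 - ζ * Complex.exp (θ * Complex.I))) (2 * Real.pi) := by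
    intro θ
    have : Complex.exp (((θ + 2 * Real.pi : ℝ):ℂ) * Complex.I) = Complex.exp (θ * Complex.I) := by
      push_cast
      rw [add_mul, Complex.exp_add, Complex.exp_two_pi_mul_I, mul_one]
    simp only [this]
  have h2 := hper.intervalIntegral_add_eq (-Real.pi) 0
  rw [show -Real.pi + 2 * Real.pi = Real.pi by ring, zero_add] at h2
  rw [h2]
  simp only [circleMap, zero_add, Complex.ofReal_one, one_mul, mul_zero, sub_zero, div_one] at this
  have hpi : (2 * Real.pi) ≠ 0 := by positivity
  have h3 := congrArg (fun w : ℂ => (2 * Real.pi) • w) this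
  simp only [smul_smul] at h3
  rw [mul_inv_cancel₀ hpi, one_smul] at h3
  rw [h3]; simp

lemma S_eq (z ζ : ℂ) (hz : z.im ≠ 0) (h1 : ‖ζ‖ < 1) (h0 : ζ ≠ 0) (h2 : ζ^2 + 1 = 2 * z * ζ) :
    Cz sqw z = - Real.pi * ζ := by
  have hne : ∀ x : ℝ, (x:ℂ) - z ≠ 0 := by
    intro x h; apply hz; rw [← sub_eq_zero.mp h]; simp
  have hζ2 : 1 - ζ^2 ≠ 0 := by
    have := one_sub_ne h1 h1.le; rwa [← pow_two] at this
  have hcont : Continuous fun x : ℝ => (sqw x : ℂ) / ((x:ℂ) - z) := by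
    have := sqw_continuous
    exact Continuous.div (by fun_prop) (by fun_prop) hne
  unfold Cz
  rw [μI_eq_interval]
  have e1 : ∫ x in (-1:ℝ)..1, (sqw x : ℂ) / ((x:ℂ) - z) =
      ∫ θ in (0:ℝ)..Real.pi, ((Real.sin θ)^2 : ℂ) / ((Real.cos θ : ℂ) - z) := by
    have := intervalIntegral.integral_comp_smul_deriv (a := 0) (b := Real.pi) (f := Real.cos)
      (f' := fun x => - Real.sin x) (g := fun x : ℝ => (sqw x : ℂ) / ((x:ℂ) - z))
      (fun x _ => Real.hasDerivAt_cos x) (by fun_prop) hcont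
    rw [Real.cos_zero, Real.cos_pi] at this
    rw [intervalIntegral.integral_symm, ← this, ← intervalIntegral.integral_neg]
    apply intervalIntegral.integral_congr
    intro θ hθ
    rw [uIcc_of_le Real.pi_pos.le] at hθ
    have hs : 0 ≤ Real.sin θ := Real.sin_nonneg_of_mem_Icc hθ
    have : sqw (Real.cos θ) = Real.sin θ := by
      unfold sqw
      rw [← Real.sin_sq, Real.sqrt_sq hs]
    simp only [Function.comp, this, neg_smul, neg_neg, Complex.real_smul]
    ring
  rw [e1]
  have hB : Continuous fun θ : ℝ => 1 / (1 - ζ * Complex.exp (θ * Complex.I)) := by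
    refine Continuous.div (by fun_prop) (by fun_prop) fun θ => one_sub_ne h1 ?_
    rw [Complex.norm_exp_ofReal_mul_I]
  have hB' : Continuous fun θ : ℝ => 1 / (1 - ζ * Complex.exp (((-θ:ℝ):ℂ) * Complex.I)) :=
    hB.comp continuous_neg
  have e2 : ∀ θ : ℝ, ((Real.sin θ)^2 : ℂ) / ((Real.cos θ : ℂ) - z) =
      -((Real.cos θ:ℂ) + z) + (1 - z^2) * (-(2 * ζ / (1 - ζ^2))) *
        (1 / (1 - ζ * Complex.exp (θ * Complex.I)) + 1 / (1 - ζ * Complex.exp (((-θ:ℝ):ℂ) * Complex.I)) - 1) := by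
    intro θ
    have n1 : 1 - ζ * Complex.exp (θ * Complex.I) ≠ 0 := one_sub_ne h1 (by rw [Complex.norm_exp_ofReal_mul_I])
    have n2 : 1 - ζ * Complex.exp (((-θ:ℝ):ℂ) * Complex.I) ≠ 0 := one_sub_ne h1 (by rw [Complex.norm_exp_ofReal_mul_I])
    have hc : (Real.cos θ : ℂ) = (Complex.exp (θ * Complex.I) + Complex.exp (((-θ:ℝ):ℂ) * Complex.I)) / 2 := by
      push_cast; rw [Complex.cos]
    have hm : Complex.exp (θ * Complex.I) * Complex.exp (((-θ:ℝ):ℂ) * Complex.I) = 1 := by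
      rw [← Complex.exp_add]; push_cast; simp
    have hsc : ((Real.sin θ)^2 : ℂ) = 1 - (Real.cos θ:ℂ)^2 := by
      exact_mod_cast Real.sin_sq θ
    have hbr : (1 / (1 - ζ * Complex.exp (θ * Complex.I)) + 1 / (1 - ζ * Complex.exp (((-θ:ℝ):ℂ) * Complex.I)) - 1)
        = (1 - ζ^2) / (2 * ζ * (z - Real.cos θ)) := by
      have hd : 2 * ζ * (z - Real.cos θ) = (1 - ζ * Complex.exp (θ * Complex.I)) * (1 - ζ * Complex.exp (((-θ:ℝ):ℂ) * Complex.I)) := by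
        rw [hc]; linear_combination -h2 - ζ^2 * hm
      rw [hd]
      generalize Complex.exp (θ * Complex.I) = u at *
      generalize Complex.exp (((-θ:ℝ):ℂ) * Complex.I) = v at *
      rw [div_add_div _ _ n1 n2, eq_div_iff (mul_ne_zero n1 n2), sub_mul, div_mul_cancel₀ _ (mul_ne_zero n1 n2)]
      linear_combination (-ζ^2) * hm
    rw [hbr, hsc]
    have := hne (Real.cos θ)
    have t2 : z - Real.cos θ ≠ 0 := by rw [← neg_sub]; exact neg_ne_zero.mpr this
    generalize (Real.cos θ : ℂ) = c at *
    field_simp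
    rw [← neg_sub z c]
    field_simp
    ring
  have hB1 := B_integral ζ h1
  have hBsum : (∫ θ in (0:ℝ)..Real.pi, 1 / (1 - ζ * Complex.exp (θ * Complex.I))) +
     (∫ θ in (0:ℝ)..Real.pi, 1 / (1 - ζ * Complex.exp (((-θ:ℝ):ℂ) * Complex.I))) = 2 * Real.pi := by
    rw [← hB1]
    rw [intervalIntegral.integral_comp_neg (fun θ : ℝ => 1 / (1 - ζ * Complex.exp ((θ:ℂ) * Complex.I))), neg_zero, add_comm]
    exact intervalIntegral.integral_add_adjacent_intervals (hB.intervalIntegrable _ _) (hB.intervalIntegrable _ _)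
  have e3 : ∫ θ in (0:ℝ)..Real.pi, ((Real.sin θ)^2 : ℂ) / ((Real.cos θ : ℂ) - z) =
     - (Real.pi * z) + (1 - z^2) * (-(2 * ζ / (1 - ζ^2))) * (2 * Real.pi - Real.pi) := by
    simp_rw [e2]
    rw [intervalIntegral.integral_add, intervalIntegral.integral_const_mul,
      intervalIntegral.integral_sub, intervalIntegral.integral_add, hBsum,
      intervalIntegral.integral_neg, intervalIntegral.integral_add]
    · have : ∫ x in (0:ℝ)..Real.pi, (Real.cos x : ℂ) = 0 := by
        rw [intervalIntegral.integral_ofReal]; simp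
      rw [this]; simp
    all_goals apply Continuous.intervalIntegrable; fun_prop
  rw [e3]
  have hz' : z = (ζ^2+1) / (2 * ζ) := by field_simp; linear_combination -h2
  rw [hz']
  field_simp
  ring

lemma S_prop (z : ℂ) (hz : z.im ≠ 0) :
    ‖Cz sqw z‖ ≤ Real.pi ∧ (Cz sqw z / Real.pi + z)^2 = z^2 - 1 := by
  obtain ⟨ζ, h1, h0, h2⟩ := exists_zeta z hz
  rw [S_eq z ζ hz h1 h0 h2]
  have hpi : (Real.pi:ℂ) ≠ 0 := by exact_mod_cast Real.pi_ne_zero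
  constructor
  · rw [norm_mul, norm_neg, Complex.norm_real, Real.norm_eq_abs, abs_of_pos Real.pi_pos]
    nlinarith [Real.pi_pos]
  · field_simp
    linear_combination h2

def qk (ε s : ℝ) : ℝ := s / (s^2 + ε^2)
def pk (ε s : ℝ) : ℝ := ε / (s^2 + ε^2)
def Qr (ε : ℝ) (f : ℝ → ℝ) (t : ℝ) : ℝ := ∫ x, f x * qk ε (x - t) ∂μI
def Pr (ε : ℝ) (f : ℝ → ℝ) (t : ℝ) : ℝ := ∫ x, f x * pk ε (x - t) ∂μI

lemma den_pos {ε : ℝ} (hε : 0 < ε) (s : ℝ) : 0 < s^2 + ε^2 := by positivity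

lemma qk_cont {ε : ℝ} (hε : 0 < ε) : Continuous (qk ε) := by
  unfold qk; exact Continuous.div (by fun_prop) (by fun_prop) fun s => (den_pos hε s).ne'
lemma pk_cont {ε : ℝ} (hε : 0 < ε) : Continuous (pk ε) := by
  unfold pk; exact Continuous.div (by fun_prop) (by fun_prop) fun s => (den_pos hε s).ne'
lemma pk_nonneg {ε : ℝ} (hε : 0 < ε) (s : ℝ) : 0 ≤ pk ε s := by unfold pk; positivity
lemma pk_le {ε : ℝ} (hε : 0 < ε) (s : ℝ) : pk ε s ≤ 1/ε := by
  unfold pk; rw [div_le_div_iff₀ (den_pos hε s) hε]; nlinarith [sq_nonneg s]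
lemma qk_le {ε : ℝ} (hε : 0 < ε) (s : ℝ) : |qk ε s| ≤ 1/ε := by
  unfold qk; rw [abs_div, abs_of_pos (den_pos hε s), div_le_div_iff₀ (den_pos hε s) hε]
  nlinarith [sq_nonneg (|s| - ε), sq_abs s, abs_nonneg s]
lemma qk_neg (ε s : ℝ) : qk ε (-s) = - qk ε s := by unfold qk; rw [neg_sq, neg_div]

lemma int_q {ε : ℝ} (hε : 0 < ε) {f : ℝ → ℝ} (hf : Integrable f μI) (t : ℝ) :
    Integrable (fun x => f x * qk ε (x - t)) μI :=
  hf.mul_bdd (c := 1/ε) ((qk_cont hε).comp (by fun_prop)).aestronglyMeasurable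
    (Eventually.of_forall fun x => qk_le hε _)
lemma int_p {ε : ℝ} (hε : 0 < ε) {f : ℝ → ℝ} (hf : Integrable f μI) (t : ℝ) :
    Integrable (fun x => f x * pk ε (x - t)) μI :=
  hf.mul_bdd (c := 1/ε) ((pk_cont hε).comp (by fun_prop)).aestronglyMeasurable
    (Eventually.of_forall fun x => by rw [Real.norm_eq_abs, abs_of_nonneg (pk_nonneg hε _)]; exact pk_le hε _)

lemma inv_eq_qp {ε : ℝ} (hε : 0 < ε) (x t : ℝ) :
    ((x:ℂ) - (t + ε * Complex.I))⁻¹ = (qk ε (x-t) : ℂ) + (pk ε (x-t) : ℂ) * Complex.I := by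
  have h := (den_pos hε (x-t)).ne'
  have h' : (((x-t)^2 + ε^2 : ℝ) : ℂ) ≠ 0 := by exact_mod_cast h
  have e : ((x:ℂ) - (t + ε * Complex.I)) * ((x - t) + ε * Complex.I) = (((x-t)^2 + ε^2 : ℝ) : ℂ) := by
    push_cast; linear_combination (-(ε:ℂ)^2) * Complex.I_sq
  have hne : ((x:ℂ) - (t + ε * Complex.I)) ≠ 0 := by
    intro h0; rw [h0, zero_mul] at e; exact h' e.symm
  unfold qk pk
  push_cast at *
  field_simp
  linear_combination -e

lemma Cz_eq {ε : ℝ} (hε : 0 < ε) {f : ℝ → ℝ} (hf : Integrable f μI) (t : ℝ) :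
    Cz f (t + ε * Complex.I) = (Qr ε f t : ℂ) + (Pr ε f t : ℂ) * Complex.I := by
  unfold Cz Qr Pr
  rw [← integral_complex_ofReal, ← integral_complex_ofReal, ← integral_mul_const, ← integral_add]
  · congr 1; ext x
    rw [div_eq_mul_inv, inv_eq_qp hε]; push_cast; ring
  · exact (int_q hε hf t).ofReal
  · exact (int_p hε hf t).ofReal.mul_const _

lemma Cz_conj (f : ℝ → ℝ) (z : ℂ) : Cz f ((starRingEnd ℂ) z) = (starRingEnd ℂ) (Cz f z) := by
  unfold Cz
  rw [← integral_conj]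
  congr 1; ext x; simp

lemma pk_integrable {ε : ℝ} (hε : 0 < ε) (t : ℝ) : Integrable (fun x => pk ε (x - t)) ∧
    ∫ x, pk ε (x - t) = Real.pi := by
  have e : ∀ s, pk ε s = ε⁻¹ * (1 + (s/ε)^2)⁻¹ := by
    intro s; unfold pk; have := den_pos hε s; field_simp; ring
  constructor
  · have := ((integrable_inv_one_add_sq.comp_div hε.ne').const_mul ε⁻¹).comp_sub_right t
    simpa only [← e] using this
  · rw [integral_sub_right_eq_self (fun x => pk ε x)]
    simp_rw [e]
    rw [integral_const_mul, Measure.integral_comp_div (fun x => (1 + x^2)⁻¹), integral_univ_inv_one_add_sq,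
      abs_of_pos hε, smul_eq_mul]
    field_simp

lemma Pr_bound {ε : ℝ} (hε : 0 < ε) {ψ : ℝ → ℝ} (hb : ∀ x, |ψ x| ≤ 1) (t : ℝ) :
    |Pr ε ψ t| ≤ Real.pi := by
  unfold Pr
  obtain ⟨h1, h2⟩ := pk_integrable hε t
  calc |∫ x, ψ x * pk ε (x-t) ∂μI| ≤ ∫ x, pk ε (x-t) ∂μI := by
        rw [← Real.norm_eq_abs]
        apply norm_integral_le_of_norm_le h1.integrableOn
        refine Eventually.of_forall fun x => ?_
        rw [norm_mul, Real.norm_eq_abs, Real.norm_eq_abs, abs_of_nonneg (pk_nonneg hε _)]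
        nlinarith [hb x, pk_nonneg hε (x-t)]
    _ ≤ ∫ x, pk ε (x-t) := setIntegral_le_integral h1 (Eventually.of_forall fun x => pk_nonneg hε _)
    _ = _ := h2

lemma μI_univ : μI.real univ = 2 := by
  unfold μI; simp [Measure.real]; norm_num

lemma Cz_le {ψ : ℝ → ℝ} (hb : ∀ x, |ψ x| ≤ 1) (z : ℂ) (hz : ∀ x ∈ Ioo (-1:ℝ) 1, 1 ≤ ‖(x:ℂ) - z‖) :
    ‖Cz ψ z‖ ≤ 2 := by
  unfold Cz
  have : ∀ᵐ x ∂μI, ‖(ψ x : ℂ) / ((x:ℂ) - z)‖ ≤ 1 := by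
    unfold μI
    refine (ae_restrict_iff' measurableSet_Ioo).mpr (Eventually.of_forall fun x hx => ?_)
    rw [norm_div, Complex.norm_real, Real.norm_eq_abs]
    rw [div_le_one (by linarith [hz x hx])]
    exact (hb x).trans (hz x hx)
  refine (norm_integral_le_of_norm_le_const this).trans ?_
  rw [μI_univ]; norm_num

lemma im_le_norm (x : ℝ) (z : ℂ) : |z.im| ≤ ‖(x:ℂ) - z‖ := by
  have := Complex.abs_im_le_norm ((x:ℂ) - z)
  simpa using this

lemma Cz_diff {ψ : ℝ → ℝ} (hf : Integrable ψ μI) (z : ℂ) (hz : 0 < z.im) :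
    DifferentiableAt ℂ (Cz ψ) z := by
  have hball : ∀ w ∈ Metric.ball z (z.im/2), z.im / 2 ≤ w.im := by
    intro w hw
    have h1 := Complex.abs_im_le_norm (w - z)
    rw [Metric.mem_ball, dist_eq_norm] at hw
    have := (abs_lt.mp (h1.trans_lt hw)).1
    simp at this; linarith
  have hne : ∀ w : ℂ, 0 < w.im → ∀ x : ℝ, (x:ℂ) - w ≠ 0 := by
    intro w hw x h
    have := congrArg Complex.im h
    simp at this; linarith
  have hm : ∀ w : ℂ, 0 < w.im → Continuous (fun x : ℝ => ((x:ℂ) - w)⁻¹) := fun w hw =>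
    Continuous.inv₀ (by fun_prop) (hne w hw)
  have := hasDerivAt_integral_of_dominated_loc_of_deriv_le (μ := μI) (𝕜 := ℂ)
    (F := fun w x => (ψ x : ℂ) / ((x:ℂ) - w)) (F' := fun w x => (ψ x : ℂ) * (((x:ℂ) - w)⁻¹)^2)
    (x₀ := z) (s := Metric.ball z (z.im/2)) (bound := fun x => |ψ x| * (2/z.im)^2)
    (Metric.ball_mem_nhds _ (by linarith)) ?_ ?_ ?_ ?_ ?_ ?_
  · exact this.2.differentiableAt
  · filter_upwards [Metric.ball_mem_nhds z (show 0 < z.im/2 by linarith)] with w hw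
    have : 0 < w.im := by linarith [hball w hw]
    exact hf.ofReal.1.mul (hm w this).aestronglyMeasurable
  · simp only [div_eq_mul_inv]
    refine hf.ofReal.mul_bdd (c := z.im⁻¹) (hm z hz).aestronglyMeasurable (Eventually.of_forall fun x => ?_)
    rw [norm_inv]
    apply inv_anti₀ hz
    have := im_le_norm x z
    rwa [abs_of_pos hz] at this
  · exact hf.ofReal.1.mul ((hm z hz).pow 2).aestronglyMeasurable
  · refine Eventually.of_forall fun x w hw => ?_
    have h1 := hball w hw
    have h2 : 0 < w.im := by linarith
    rw [norm_mul, norm_pow, norm_inv, Complex.norm_real, Real.norm_eq_abs]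
    gcongr
    rw [← inv_div]
    apply inv_anti₀ (by linarith)
    have := im_le_norm x w
    rw [abs_of_pos h2] at this; linarith
  · exact hf.abs.mul_const _
  · refine Eventually.of_forall fun x w hw => ?_
    have h2 : 0 < w.im := by linarith [hball w hw]
    have hd : HasDerivAt (fun w : ℂ => (x:ℂ) - w) (-1) w := by
      simpa using (hasDerivAt_id w).const_sub (x:ℂ)
    have := (hd.inv (hne w h2 x)).const_mul (ψ x:ℂ)
    simp only [div_eq_mul_inv]
    have e : (ψ x : ℂ) * ((x:ℂ) - w)⁻¹ ^ 2 = ψ x * (- -1 / ((x:ℂ) - w) ^ 2) := by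
      rw [neg_neg, one_div, inv_pow]
    rw [e]
    exact this

def KK : ℝ := 6 * Real.exp 1 / Real.cos 1

lemma exp_bound1 {ε : ℝ} (hε : 0 < ε) {ψ : ℝ → ℝ} (hm : Measurable ψ) (hb : ∀ x, |ψ x| ≤ 1) :
    Continuous (Qr ε ψ) ∧ ∫ t, Real.exp (Qr ε ψ t / Real.pi) ∂μI ≤ KK := by
  have hi : Integrable ψ μI := Integrable.of_bound (C := 1) hm.aestronglyMeasurable
    (Eventually.of_forall hb)
  set Φ : ℂ → ℂ := fun z => Complex.exp (Cz ψ z / Real.pi) with hΦ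
  have hdiff : ∀ z : ℂ, 0 < z.im → DifferentiableAt ℂ Φ z := fun z hz =>
    ((Cz_diff hi z hz).div_const _).cexp
  have hcontC : Continuous fun t : ℝ => Cz ψ (t + ε * Complex.I) := by
    rw [continuous_iff_continuousAt]
    intro t
    have h1 : ContinuousAt (Cz ψ) (t + ε * Complex.I) := (Cz_diff hi _ (by simpa using hε)).continuousAt
    exact ContinuousAt.comp (f := fun t : ℝ => (t:ℂ) + ε * Complex.I) h1 (by fun_prop)
  have hQ : Qr ε ψ = fun t : ℝ => (Cz ψ (t + ε * Complex.I)).re := by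
    ext t; rw [Cz_eq hε hi]; simp
  have hP : Pr ε ψ = fun t : ℝ => (Cz ψ (t + ε * Complex.I)).im := by
    ext t; rw [Cz_eq hε hi]; simp
  have hQc : Continuous (Qr ε ψ) := by rw [hQ]; exact Complex.continuous_re.comp hcontC
  have hPc : Continuous (Pr ε ψ) := by rw [hP]; exact Complex.continuous_im.comp hcontC
  refine ⟨hQc, ?_⟩
  have hpi3 := Real.pi_gt_three
  have hle : ∀ z : ℂ, (∀ x ∈ Ioo (-1:ℝ) 1, 1 ≤ ‖(x:ℂ) - z‖) → ‖Φ z‖ ≤ Real.exp 1 := by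
    intro z hz
    rw [hΦ]; simp only
    rw [Complex.norm_exp]
    apply Real.exp_le_exp.mpr
    refine (Complex.re_le_norm _).trans ?_
    rw [norm_div, Complex.norm_real, Real.norm_eq_abs, abs_of_pos Real.pi_pos, div_le_one Real.pi_pos]
    linarith [Cz_le hb z hz]
  have rect := Complex.integral_boundary_rect_eq_zero_of_differentiableOn Φ
    (⟨-2, ε⟩ : ℂ) (⟨2, ε+1⟩ : ℂ) (by
      intro z hz
      refine (hdiff z ?_).differentiableWithinAt
      rw [Complex.mem_reProdIm, uIcc_of_le, uIcc_of_le] at hz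
      · simp at hz; linarith [hz.2.1]
      · simp
      · simp)
  simp only at rect
  have htop : ‖∫ x : ℝ in (-2:ℝ)..2, Φ (x + ((ε+1:ℝ):ℂ) * Complex.I)‖ ≤ Real.exp 1 * |2 - (-2)| := by
    apply intervalIntegral.norm_integral_le_of_norm_le_const
    intro x _
    apply hle
    intro y _
    refine le_trans ?_ (im_le_norm y _)
    simp; rw [abs_of_pos] <;> linarith
  have hright : ‖∫ y : ℝ in ε..(ε+1), Φ (((2:ℝ):ℂ) + y * Complex.I)‖ ≤ Real.exp 1 * |ε + 1 - ε| := by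
    apply intervalIntegral.norm_integral_le_of_norm_le_const
    intro x _
    apply hle
    intro y hy
    refine le_trans ?_ (Complex.abs_re_le_norm _)
    simp
    rw [abs_of_neg] <;> linarith [hy.1, hy.2]
  have hleft : ‖∫ y : ℝ in ε..(ε+1), Φ (((-2:ℝ):ℂ) + y * Complex.I)‖ ≤ Real.exp 1 * |ε + 1 - ε| := by
    apply intervalIntegral.norm_integral_le_of_norm_le_const
    intro x _
    apply hle
    intro y hy
    refine le_trans ?_ (Complex.abs_re_le_norm _)
    simp
    rw [abs_of_pos] <;> linarith [hy.1, hy.2]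
  have hbot : ‖∫ x : ℝ in (-2:ℝ)..2, Φ (x + (ε:ℂ) * Complex.I)‖ ≤ 6 * Real.exp 1 := by
    have e : (∫ x : ℝ in (-2:ℝ)..2, Φ (x + (ε:ℂ) * Complex.I)) =
      (∫ x : ℝ in (-2:ℝ)..2, Φ (x + ((ε+1:ℝ):ℂ) * Complex.I)) -
      Complex.I • (∫ y : ℝ in ε..(ε+1), Φ (((2:ℝ):ℂ) + y * Complex.I)) +
      Complex.I • (∫ y : ℝ in ε..(ε+1), Φ (((-2:ℝ):ℂ) + y * Complex.I)) := by
      linear_combination rect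
    rw [e]
    refine (norm_add_le _ _).trans ?_
    refine (add_le_add_left (norm_sub_le _ _) _).trans ?_
    rw [norm_smul, norm_smul, Complex.norm_I]
    norm_num at htop hright hleft ⊢
    linarith
  have hre : (∫ x : ℝ in (-2:ℝ)..2, Φ (x + (ε:ℂ) * Complex.I)).re =
      ∫ x : ℝ in (-2:ℝ)..2, Real.exp (Qr ε ψ x / Real.pi) * Real.cos (Pr ε ψ x / Real.pi) := by
    have hint : IntervalIntegrable (fun x : ℝ => Φ (x + (ε:ℂ) * Complex.I)) volume (-2) 2 := by
      apply Continuous.intervalIntegrable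
      exact Complex.continuous_exp.comp (hcontC.div_const _)
    have := Complex.reCLM.intervalIntegral_comp_comm hint
    simp only [Complex.reCLM_apply] at this
    rw [← this]
    congr 1; ext x
    rw [hΦ]; simp only
    rw [Complex.exp_re, Cz_eq hε hi]
    have e : ((Qr ε ψ x:ℂ) + (Pr ε ψ x:ℂ) * Complex.I) / (Real.pi:ℂ) =
      ((Qr ε ψ x / Real.pi : ℝ) : ℂ) + ((Pr ε ψ x / Real.pi : ℝ):ℂ) * Complex.I := by
      push_cast; ring
    rw [e]; simp
  have hcos1 : 0 < Real.cos 1 := Real.cos_one_pos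
  have hcos : ∀ x, Real.cos 1 ≤ Real.cos (Pr ε ψ x / Real.pi) := by
    intro x
    have h1 : |Pr ε ψ x / Real.pi| ≤ 1 := by
      rw [abs_div, abs_of_pos Real.pi_pos, div_le_one Real.pi_pos]; exact Pr_bound hε hb x
    rw [← Real.cos_abs (Pr ε ψ x / Real.pi)]
    exact Real.cos_le_cos_of_nonneg_of_le_pi (abs_nonneg _) (by linarith) h1
  unfold KK
  rw [le_div_iff₀ hcos1]
  have c1 : Continuous fun x => Real.exp (Qr ε ψ x / Real.pi) := by fun_prop
  have c2 : Continuous fun x => Real.exp (Qr ε ψ x / Real.pi) * Real.cos (Pr ε ψ x / Real.pi) := by fun_prop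
  calc (∫ t, Real.exp (Qr ε ψ t / Real.pi) ∂μI) * Real.cos 1
      = ∫ t in (-1:ℝ)..1, Real.exp (Qr ε ψ t / Real.pi) * Real.cos 1 := by
        rw [intervalIntegral.integral_mul_const, intervalIntegral.integral_of_le (by norm_num), integral_Ioc_eq_integral_Ioo]; rfl
    _ ≤ ∫ t in (-2:ℝ)..2, Real.exp (Qr ε ψ t / Real.pi) * Real.cos 1 := by
        apply intervalIntegral.integral_mono_interval (by norm_num) (by norm_num) (by norm_num)
        · exact Eventually.of_forall fun x => by positivity
        · exact (c1.mul_const _).intervalIntegrable _ _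
    _ ≤ ∫ t in (-2:ℝ)..2, Real.exp (Qr ε ψ t / Real.pi) * Real.cos (Pr ε ψ t / Real.pi) := by
        apply intervalIntegral.integral_mono (by norm_num)
        · exact (c1.mul_const _).intervalIntegrable _ _
        · exact c2.intervalIntegrable _ _
        · intro x; exact mul_le_mul_of_nonneg_left (hcos x) (Real.exp_pos _).le
    _ ≤ _ := by rw [← hre]; exact (Complex.re_le_norm _).trans hbot

lemma ae_μI {p : ℝ → Prop} (h : ∀ x ∈ Ioo (-1:ℝ) 1, p x) : ∀ᵐ x ∂μI, p x := by
  unfold μI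
  exact (ae_restrict_iff' measurableSet_Ioo).mpr (Eventually.of_forall h)

lemma integrable_of_cont {E : Type*} [NormedAddCommGroup E] {g : ℝ → E} (hg : Continuous g) : Integrable g μI := by
  unfold μI
  exact (hg.integrableOn_Icc (a := -1) (b := 1)).mono_set Ioo_subset_Icc_self

lemma Cz_line_cont {ε : ℝ} (hε : 0 < ε) {f : ℝ → ℝ} (hi : Integrable f μI) :
    Continuous fun t : ℝ => Cz f (t + ε * Complex.I) := by
  rw [continuous_iff_continuousAt]
  intro t
  have h1 : ContinuousAt (Cz f) (t + ε * Complex.I) := (Cz_diff hi _ (by simpa using hε)).continuousAt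
  exact ContinuousAt.comp (f := fun t : ℝ => (t:ℂ) + ε * Complex.I) h1 (by fun_prop)

lemma Qr_re {ε : ℝ} (hε : 0 < ε) {f : ℝ → ℝ} (hi : Integrable f μI) (t : ℝ) :
    Qr ε f t = (Cz f (t + ε * Complex.I)).re := by rw [Cz_eq hε hi]; simp

lemma Pr_im {ε : ℝ} (hε : 0 < ε) {f : ℝ → ℝ} (hi : Integrable f μI) (t : ℝ) :
    Pr ε f t = (Cz f (t + ε * Complex.I)).im := by rw [Cz_eq hε hi]; simp

lemma Qr_cont {ε : ℝ} (hε : 0 < ε) {f : ℝ → ℝ} (hi : Integrable f μI) : Continuous (Qr ε f) := by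
  have : Qr ε f = fun t : ℝ => (Cz f (t + ε * Complex.I)).re := by ext t; exact Qr_re hε hi t
  rw [this]; exact Complex.continuous_re.comp (Cz_line_cont hε hi)

lemma Qr_int {ε : ℝ} (hε : 0 < ε) {f : ℝ → ℝ} (hi : Integrable f μI) : Integrable (Qr ε f) μI :=
  integrable_of_cont (Qr_cont hε hi)

lemma Qr_add {ε : ℝ} (hε : 0 < ε) {f g : ℝ → ℝ} (hf : Integrable f μI) (hg : Integrable g μI) (t : ℝ) :
    Qr ε (fun x => f x + g x) t = Qr ε f t + Qr ε g t := by
  unfold Qr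
  rw [← integral_add (int_q hε hf t) (int_q hε hg t)]
  congr 1; ext x; ring

lemma Qr_sub {ε : ℝ} (hε : 0 < ε) {f g : ℝ → ℝ} (hf : Integrable f μI) (hg : Integrable g μI) (t : ℝ) :
    Qr ε (fun x => f x - g x) t = Qr ε f t - Qr ε g t := by
  unfold Qr
  rw [← integral_sub (int_q hε hf t) (int_q hε hg t)]
  congr 1; ext x; ring

lemma fubini {ε : ℝ} (hε : 0 < ε) {f : ℝ → ℝ} {g : ℝ → ℂ} (hf : Integrable f μI) (hg : Integrable g μI) :
    ∫ t, g t * (Qr ε f t : ℂ) ∂μI = - ∫ x, (f x : ℂ) * (∫ t, g t * (qk ε (t - x) : ℂ) ∂μI) ∂μI := by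
  have hint : Integrable (fun p : ℝ × ℝ => (g p.1 * (f p.2 : ℂ)) * (qk ε (p.2 - p.1) : ℂ)) (μI.prod μI) := by
    refine (hg.mul_prod hf.ofReal).mul_bdd (c := 1/ε) ?_ ?_
    · have := qk_cont hε
      exact (Complex.continuous_ofReal.comp (this.comp (by fun_prop))).aestronglyMeasurable
    · refine Eventually.of_forall fun p => ?_
      rw [Complex.norm_real]; exact qk_le hε _
  have sw := integral_integral_swap (f := fun t x => (g t * (f x : ℂ)) * (qk ε (x - t) : ℂ)) hint
  have l : ∀ t, g t * (Qr ε f t : ℂ) = ∫ x, (g t * (f x : ℂ)) * (qk ε (x - t) : ℂ) ∂μI := by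
    intro t
    unfold Qr
    rw [← integral_complex_ofReal, ← integral_const_mul]
    congr 1; ext x; push_cast; ring
  simp_rw [l]
  rw [sw, ← integral_neg]
  congr 1; ext x
  rw [← integral_const_mul, ← integral_neg]
  congr 1; ext t
  rw [← neg_sub t x, qk_neg]; push_cast; ring

lemma dual_bound {ε : ℝ} (hε : 0 < ε) {h : ℝ → ℝ} (hh : Integrable h μI) :
    ∃ q : ℝ → ℝ, Continuous q ∧ (∀ x, 0 ≤ q x) ∧ (∃ B, ∀ x, q x ≤ B) ∧ ∫ x, Real.exp (q x) ∂μI ≤ 2 * KK ∧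
      ∫ t, |Qr ε h t| ∂μI ≤ Real.pi * ∫ x, |h x| * q x ∂μI := by
  have hc := Qr_cont hε hh
  set ψ : ℝ → ℝ := fun t => if 0 ≤ Qr ε h t then 1 else -1 with hψ
  have hm : Measurable ψ := Measurable.ite (measurableSet_le measurable_const hc.measurable)
    measurable_const measurable_const
  have hb : ∀ x, |ψ x| ≤ 1 := by
    intro x; rw [hψ]; simp only; split_ifs <;> simp
  have hi : Integrable ψ μI := Integrable.of_bound (C := 1) hm.aestronglyMeasurable
    (Eventually.of_forall hb)
  have e1 := exp_bound1 hε hm hb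
  have e2 := exp_bound1 hε (ψ := fun x => - ψ x) hm.neg (by intro x; rw [abs_neg]; exact hb x)
  have hneg : ∀ t, Qr ε (fun x => - ψ x) t = - Qr ε ψ t := by
    intro t; unfold Qr; rw [← integral_neg]; congr 1; ext x; ring
  simp only [hneg] at e2
  have hqc : Continuous (Qr ε ψ) := e1.1
  have hBd : ∀ x, |Qr ε ψ x| ≤ 2/ε := by
    intro x
    unfold Qr
    have : ‖∫ y, ψ y * qk ε (y - x) ∂μI‖ ≤ (1/ε) * μI.real univ := by
      apply norm_integral_le_of_norm_le_const
      refine Eventually.of_forall fun y => ?_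
      rw [norm_mul, Real.norm_eq_abs, Real.norm_eq_abs]
      nlinarith [hb y, qk_le hε (y-x), abs_nonneg (ψ y), abs_nonneg (qk ε (y-x))]
    rw [μI_univ] at this
    rw [Real.norm_eq_abs] at this
    linarith [this, show (1/ε)*2 = 2/ε by ring]
  refine ⟨fun x => |Qr ε ψ x| / Real.pi, by fun_prop, fun x => by positivity, ⟨2/ε/Real.pi, fun x => ?_⟩, ?_, ?_⟩
  · exact div_le_div_of_nonneg_right (hBd x) Real.pi_pos.le
  · calc ∫ x, Real.exp (|Qr ε ψ x| / Real.pi) ∂μI ≤ ∫ x, (Real.exp (Qr ε ψ x / Real.pi) + Real.exp (- Qr ε ψ x / Real.pi)) ∂μI := by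
          apply integral_mono
          · apply integrable_of_cont; fun_prop
          · apply integrable_of_cont; fun_prop
          · intro x
            simp only
            rcases abs_cases (Qr ε ψ x) with ⟨h, _⟩ | ⟨h, _⟩ <;> rw [h] <;>
              linarith [Real.exp_pos (Qr ε ψ x / Real.pi), Real.exp_pos (-Qr ε ψ x / Real.pi)]
      _ = _ := by
          apply integral_add <;> (apply integrable_of_cont; fun_prop)
      _ ≤ _ := by linarith [e1.2, e2.2]
  · have fub := fubini hε hh hi.ofReal
    have l : ∀ t, |Qr ε h t| = ψ t * Qr ε h t := by
      intro t; rw [hψ]; simp only; split_ifs with h0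
      · rw [abs_of_nonneg h0, one_mul]
      · rw [abs_of_neg (not_le.mp h0)]; ring
    have e : ∫ t, |Qr ε h t| ∂μI = - ∫ x, h x * Qr ε ψ x ∂μI := by
      simp_rw [l]
      have r : ∀ x, ∫ t, (ψ t : ℂ) * (qk ε (t - x) : ℂ) ∂μI = (Qr ε ψ x : ℂ) := by
        intro x; unfold Qr; rw [← integral_complex_ofReal]; congr 1; ext t; push_cast; rfl
      have fub2 : ∫ t, ((ψ t : ℝ) : ℂ) * (Qr ε h t : ℂ) ∂μI = - ∫ x, (h x : ℂ) * (Qr ε ψ x : ℂ) ∂μI := by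
        simp_rw [← r]; exact fub
      apply Complex.ofReal_injective
      push_cast
      rw [← integral_complex_ofReal, ← integral_complex_ofReal]
      push_cast
      exact fub2
    rw [e, ← integral_neg, ← integral_const_mul]
    have hib : ∀ {k : ℝ → ℝ}, Integrable k μI → Integrable (fun x => k x * Qr ε ψ x) μI := fun hk =>
      hk.mul_bdd (c := 2/ε) hqc.aestronglyMeasurable (Eventually.of_forall hBd)
    have hib' : Integrable (fun x => |h x| * |Qr ε ψ x|) μI := by
      have := (hib hh).abs; simpa only [abs_mul] using this
    apply integral_mono (hib hh).neg
    · have e : (fun x => Real.pi * (|h x| * (|Qr ε ψ x| / Real.pi))) = fun x => |h x| * |Qr ε ψ x| := by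
        ext x; field_simp
      rw [e]; exact hib'
    · intro x
      simp only
      have e : Real.pi * (|h x| * (|Qr ε ψ x| / Real.pi)) = |h x| * |Qr ε ψ x| := by field_simp
      rw [e, ← abs_mul]; exact neg_le_abs _

lemma L1bound {ε δ : ℝ} (hε : 0 < ε) (hδ : 0 ≤ δ) {h W : ℝ → ℝ} (hh : Integrable h μI) (hW : Integrable W μI)
    (hy : ∀ x, ∀ q : ℝ, 0 ≤ q → |h x| * q ≤ W x + δ * Real.exp q) :
    ∫ t, |Qr ε h t| ∂μI ≤ Real.pi * (∫ x, W x ∂μI + δ * (2 * KK)) := by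
  obtain ⟨q, hc, h0, ⟨B, hB⟩, hK, hle⟩ := dual_bound hε hh
  refine hle.trans ?_
  apply mul_le_mul_of_nonneg_left _ Real.pi_pos.le
  have hexp : Integrable (fun x => Real.exp (q x)) μI := integrable_of_cont (by fun_prop)
  calc ∫ x, |h x| * q x ∂μI ≤ ∫ x, (W x + δ * Real.exp (q x)) ∂μI := by
        apply integral_mono
        · exact hh.abs.mul_bdd (c := B) hc.aestronglyMeasurable
            (Eventually.of_forall fun x => by rw [Real.norm_eq_abs, abs_of_nonneg (h0 x)]; exact hB x)
        · exact hW.add (hexp.const_mul δ)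
        · intro x; exact hy x _ (h0 x)
    _ = ∫ x, W x ∂μI + δ * ∫ x, Real.exp (q x) ∂μI := by
        rw [integral_add hW (hexp.const_mul δ), integral_const_mul]
    _ ≤ _ := by gcongr

lemma young_sq {δ a q : ℝ} (hδ : 0 < δ) (hq : 0 ≤ q) : |a| * q ≤ a^2 / δ + δ * Real.exp q := by
  have h1 : q^2/2 ≤ Real.exp q := by
    have := Real.quadratic_le_exp_of_nonneg hq; linarith
  have h2 : |a| * q ≤ a^2/δ + δ * (q^2/2) := by
    have : 0 ≤ (|a| - δ * q/2)^2/δ := by positivity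
    have e : (|a| - δ * q/2)^2/δ = a^2/δ - |a| * q + δ * q^2/4 := by
      field_simp; rw [← sq_abs a]; ring
    nlinarith [sq_nonneg q]
  nlinarith

lemma young_log {δ a q : ℝ} (hδ : 0 < δ) (hq : 0 ≤ q) :
    |a| * q ≤ |a| * max (Real.log (|a|/δ)) 0 + δ * Real.exp q := by
  rcases le_or_gt q (max (Real.log (|a|/δ)) 0) with h | h
  · have := mul_le_mul_of_nonneg_left h (abs_nonneg a)
    have := Real.exp_pos q
    nlinarith
  · have h0 : 0 ≤ |a| * max (Real.log (|a|/δ)) 0 := by positivity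
    rcases eq_or_lt_of_le (abs_nonneg a) with ha | ha
    · rw [← ha]; simp; positivity
    set s := |a|/δ with hs
    have hsp : 0 < s := by positivity
    have has : |a| = δ * s := by rw [hs]; field_simp
    have key : s * (q - Real.log s) ≤ Real.exp q := by
      have := Real.add_one_le_exp (q - Real.log s)
      rw [Real.exp_sub, Real.exp_log hsp, le_div_iff₀ hsp] at this
      nlinarith
    have : s * Real.log s ≤ s * max (Real.log s) 0 := by gcongr; exact le_max_left _ _
    rw [has]
    nlinarith

lemma R_lim {t : ℝ} (ht : t ∈ Ioo (-1:ℝ) 1) :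
    Tendsto (fun ε : ℝ => Cz sqw (t + ε * Complex.I) / Real.pi + (t + ε * Complex.I)) (𝓝[>] 0)
      (𝓝 (sqw t * Complex.I)) := by
  have hs2 : 0 < 1 - t^2 := by nlinarith [ht.1, ht.2]
  have hs : 0 < sqw t := Real.sqrt_pos.mpr hs2
  have hsq : (sqw t)^2 = 1 - t^2 := Real.sq_sqrt hs2.le
  rw [tendsto_iff_norm_sub_tendsto_zero]
  have hb : Tendsto (fun ε : ℝ => ‖((t:ℂ) + ε * Complex.I)^2 - t^2‖ / sqw t) (𝓝[>] 0) (𝓝 0) := by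
    have : Continuous fun ε : ℝ => ‖((t:ℂ) + ε * Complex.I)^2 - t^2‖ / sqw t := by fun_prop
    have := this.tendsto 0
    simp at this
    exact this.mono_left nhdsWithin_le_nhds
  refine squeeze_zero' (Eventually.of_forall fun _ => norm_nonneg _) ?_ hb
  filter_upwards [self_mem_nhdsWithin] with ε hε
  have hε : 0 < ε := hε
  have hP := (S_prop (t + ε * Complex.I) (by simpa using hε.ne')).2
  have hi : Integrable sqw μI := integrable_of_cont sqw_continuous
  have him : 0 ≤ (Cz sqw (t + ε * Complex.I) / Real.pi + (t + ε * Complex.I)).im := by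
    rw [Complex.add_im, Complex.div_ofReal_im, ← Pr_im hε hi]
    have h1 : 0 ≤ Pr ε sqw t := integral_nonneg fun x => mul_nonneg (Real.sqrt_nonneg _) (pk_nonneg hε _)
    have : 0 ≤ Pr ε sqw t / Real.pi := div_nonneg h1 Real.pi_pos.le
    simp; linarith
  set R := Cz sqw (t + ε * Complex.I) / Real.pi + (t + ε * Complex.I) with hR
  have hge : sqw t ≤ ‖R + sqw t * Complex.I‖ := by
    refine le_trans ?_ (Complex.im_le_norm _)
    simp; linarith
  rw [le_div_iff₀ hs]
  calc ‖R - sqw t * Complex.I‖ * sqw t ≤ ‖R - sqw t * Complex.I‖ * ‖R + sqw t * Complex.I‖ := by gcongr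
    _ = ‖((t:ℂ) + ε * Complex.I)^2 - t^2‖ := by
      rw [← norm_mul]
      congr 1
      have : ((sqw t : ℝ):ℂ)^2 = 1 - (t:ℂ)^2 := by exact_mod_cast hsq
      linear_combination hP - (sqw t:ℂ)^2 * Complex.I_sq + this

/-- moment functions -/
def mom (n : ℕ) (x : ℝ) : ℝ := sqw x * x^n
lemma mom_cont (n : ℕ) : Continuous (mom n) := by
  have := sqw_continuous; unfold mom; fun_prop

lemma Cz_mom_succ (n : ℕ) (z : ℂ) (hz : 0 < z.im) :
    Cz (mom (n+1)) z = (∫ x, (mom n x : ℂ) ∂μI) + z * Cz (mom n) z := by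
  have hne : ∀ x : ℝ, (x:ℂ) - z ≠ 0 := by
    intro x h
    have := congrArg Complex.im h
    simp at this; linarith
  have hc := mom_cont n
  have hcd : Continuous fun x : ℝ => (mom n x : ℂ) / ((x:ℂ) - z) :=
    Continuous.div (by fun_prop) (by fun_prop) hne
  unfold Cz
  rw [← integral_const_mul, ← integral_add]
  · congr 1; ext x
    have := hne x
    unfold mom
    field_simp
    push_cast; ring
  · exact integrable_of_cont (by fun_prop)
  · exact integrable_of_cont (by fun_prop)

lemma mom_conv (n : ℕ) : (∀ t ∈ Ioo (-1:ℝ) 1, ∃ L : ℂ,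
      Tendsto (fun ε : ℝ => Cz (mom n) (t + ε * Complex.I)) (𝓝[>] 0) (𝓝 L)) ∧
    ∃ B : ℝ, ∀ t ∈ Ioo (-1:ℝ) 1, ∀ ε : ℝ, 0 < ε → ε ≤ 1 → ‖Cz (mom n) (t + ε * Complex.I)‖ ≤ B := by
  have hpi : (Real.pi:ℂ) ≠ 0 := by exact_mod_cast Real.pi_ne_zero
  have hlin : ∀ t : ℝ, Tendsto (fun ε : ℝ => (t:ℂ) + ε * Complex.I) (𝓝[>] 0) (𝓝 t) := by
    intro t
    have : Continuous fun ε : ℝ => (t:ℂ) + ε * Complex.I := by fun_prop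
    have := this.tendsto 0
    simp at this
    exact this.mono_left nhdsWithin_le_nhds
  induction n with
  | zero =>
    have e : mom 0 = sqw := by ext x; simp [mom]
    rw [e]
    constructor
    · intro t ht
      refine ⟨_, (((R_lim ht).sub (hlin t)).const_mul (Real.pi:ℂ)).congr fun ε => ?_⟩
      field_simp
      ring
    · exact ⟨Real.pi, fun t _ ε hε _ => (S_prop _ (by simpa using hε.ne')).1⟩
  | succ n ih =>
    obtain ⟨h1, B, hB⟩ := ih
    constructor
    · intro t ht
      obtain ⟨L, hL⟩ := h1 t ht
      refine ⟨_, (((hlin t).mul hL).const_add (∫ x, (mom n x : ℂ) ∂μI)).congr' ?_⟩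
      filter_upwards [self_mem_nhdsWithin] with ε hε
      rw [Cz_mom_succ n _ (by simpa using hε)]
    · refine ⟨‖∫ x, (mom n x : ℂ) ∂μI‖ + 2 * B, fun t ht ε hε hε1 => ?_⟩
      rw [Cz_mom_succ n _ (by simpa using hε)]
      refine (norm_add_le _ _).trans ?_
      rw [norm_mul]
      have : ‖(t:ℂ) + ε * Complex.I‖ ≤ 2 := by
        refine (norm_add_le _ _).trans ?_
        rw [norm_mul, Complex.norm_I, Complex.norm_real, Complex.norm_real, Real.norm_eq_abs, Real.norm_eq_abs,
          abs_of_pos hε]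
        linarith [abs_lt.mpr ht]
      gcongr
      exact hB t ht ε hε hε1

lemma sqw_nonneg (x : ℝ) : 0 ≤ sqw x := Real.sqrt_nonneg _

def es (n : ℕ) : ℝ := 1 / ((n:ℝ) + 1)
lemma es_pos (n : ℕ) : 0 < es n := by unfold es; positivity
lemma es_le (n : ℕ) : es n ≤ 1 := by
  unfold es; rw [div_le_one (by positivity)]; linarith [Nat.cast_nonneg (α := ℝ) n]
lemma es_tendsto : Tendsto es atTop (𝓝[>] 0) :=
  tendsto_nhdsWithin_iff.mpr ⟨tendsto_one_div_add_atTop_nhds_zero_nat, Eventually.of_forall es_pos⟩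

def Good (f : ℝ → ℝ) : Prop := ∃ H : ℝ → ℝ, Integrable H μI ∧
  Tendsto (fun n => ∫ t, |Qr (es n) f t - H t| ∂μI) atTop (𝓝 0)

def Conv (g : ℝ → ℝ) : Prop := Continuous g ∧ (∀ t ∈ Ioo (-1:ℝ) 1, ∃ L : ℝ,
      Tendsto (fun ε : ℝ => Qr ε g t) (𝓝[>] 0) (𝓝 L)) ∧
    ∃ B : ℝ, ∀ t ∈ Ioo (-1:ℝ) 1, ∀ ε : ℝ, 0 < ε → ε ≤ 1 → |Qr ε g t| ≤ B

lemma conv_mom (n : ℕ) : Conv (mom n) := by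
  have hi := integrable_of_cont (mom_cont n)
  obtain ⟨h1, B, hB⟩ := mom_conv n
  refine ⟨mom_cont n, fun t ht => ?_, B, fun t ht ε hε h1 => ?_⟩
  · obtain ⟨L, hL⟩ := h1 t ht
    refine ⟨L.re, ((Complex.continuous_re.tendsto L).comp hL).congr' ?_⟩
    filter_upwards [self_mem_nhdsWithin] with ε hε
    rw [Qr_re hε hi]; rfl
  · rw [Qr_re hε hi]
    exact (Complex.abs_re_le_norm _).trans (hB t ht ε hε h1)

lemma Conv.add {f g : ℝ → ℝ} (hf : Conv f) (hg : Conv g) : Conv (fun x => f x + g x) := by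
  obtain ⟨c1, l1, B1, b1⟩ := hf
  obtain ⟨c2, l2, B2, b2⟩ := hg
  have i1 := integrable_of_cont c1
  have i2 := integrable_of_cont c2
  refine ⟨c1.add c2, fun t ht => ?_, B1 + B2, fun t ht ε hε h1 => ?_⟩
  · obtain ⟨L1, h1⟩ := l1 t ht
    obtain ⟨L2, h2⟩ := l2 t ht
    refine ⟨L1 + L2, (h1.add h2).congr' ?_⟩
    filter_upwards [self_mem_nhdsWithin] with ε hε
    rw [Qr_add hε i1 i2]
  · rw [Qr_add hε i1 i2]
    exact (abs_add_le _ _).trans (add_le_add (b1 t ht ε hε h1) (b2 t ht ε hε h1))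

lemma Qr_smul (c ε : ℝ) (f : ℝ → ℝ) (t : ℝ) : Qr ε (fun x => c * f x) t = c * Qr ε f t := by
  unfold Qr; rw [← integral_const_mul]; congr 1; ext x; ring

lemma Conv.smul {f : ℝ → ℝ} (c : ℝ) (hf : Conv f) : Conv (fun x => c * f x) := by
  obtain ⟨c1, l1, B1, b1⟩ := hf
  refine ⟨by fun_prop, fun t ht => ?_, |c| * B1, fun t ht ε hε h1 => ?_⟩
  · obtain ⟨L1, h1⟩ := l1 t ht
    exact ⟨c * L1, (h1.const_mul c).congr fun ε => (Qr_smul c ε f t).symm⟩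
  · rw [Qr_smul, abs_mul]
    exact mul_le_mul_of_nonneg_left (b1 t ht ε hε h1) (abs_nonneg _)

lemma conv_poly (p : Polynomial ℝ) : Conv (fun x => sqw x * p.eval x) := by
  induction p using Polynomial.induction_on' with
  | add p q hp hq =>
    convert hp.add hq using 2 with x
    rw [Polynomial.eval_add]; ring
  | monomial n a =>
    convert (conv_mom n).smul a using 2 with x
    rw [Polynomial.eval_monomial]; unfold mom; ring

lemma Conv.good {g : ℝ → ℝ} (hg : Conv g) : Good g := by
  obtain ⟨c1, l1, B, b1⟩ := hg
  have hi := integrable_of_cont c1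
  choose! L hL using l1
  have hLn : ∀ t ∈ Ioo (-1:ℝ) 1, Tendsto (fun n => Qr (es n) g t) atTop (𝓝 (L t)) :=
    fun t ht => (hL t ht).comp es_tendsto
  have hLm : AEStronglyMeasurable L μI :=
    aestronglyMeasurable_of_tendsto_ae atTop
      (fun n => (Qr_cont (es_pos n) hi).aestronglyMeasurable) (ae_μI hLn)
  have hLb : ∀ t ∈ Ioo (-1:ℝ) 1, |L t| ≤ B := fun t ht =>
    le_of_tendsto (hLn t ht).abs (Eventually.of_forall fun n => b1 t ht _ (es_pos n) (es_le n))
  have hLi : Integrable L μI := Integrable.of_bound (C := B) hLm (ae_μI hLb)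
  refine ⟨L, hLi, ?_⟩
  have := tendsto_integral_of_dominated_convergence (μ := μI) (F := fun n t => |Qr (es n) g t - L t|)
    (f := fun _ => 0) (fun _ => 2 * B) ?_ (integrable_const _) ?_ ?_
  · simpa using this
  · intro n
    exact ((Qr_cont (es_pos n) hi).aestronglyMeasurable.sub hLm).norm
  · intro n
    refine ae_μI fun t ht => ?_
    rw [Real.norm_eq_abs, abs_abs]
    have := b1 t ht _ (es_pos n) (es_le n)
    have := hLb t ht
    exact (abs_sub _ _).trans (by linarith)
  · refine ae_μI fun t ht => ?_
    have := ((hLn t ht).sub_const (L t)).abs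
    simpa using this

lemma good_of_approx {f : ℝ → ℝ} (hf : Integrable f μI)
    (h : ∀ η > 0, ∃ g : ℝ → ℝ, Integrable g μI ∧ Good g ∧ ∀ n, ∫ t, |Qr (es n) (fun x => f x - g x) t| ∂μI ≤ η) :
    Good f := by
  have hi := fun n => Qr_int (es_pos n) hf
  set u : ℕ → (ℝ →₁[μI] ℝ) := fun n => (hi n).toL1 _ with hu
  have hd : ∀ n m, dist (u n) (u m) = ∫ t, |Qr (es n) f t - Qr (es m) f t| ∂μI := by
    intro n m
    rw [dist_eq_norm, hu]; simp only
    rw [← Integrable.toL1_sub, L1.norm_of_fun_eq_integral_norm]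
    rfl
  have hc : CauchySeq u := by
    rw [Metric.cauchySeq_iff]
    intro η hη
    obtain ⟨g, hg, ⟨H, hH, hlim⟩, happ⟩ := h (η/6) (by positivity)
    have := (tendsto_order.mp hlim).2 (η/6) (by positivity)
    obtain ⟨N, hN⟩ := eventually_atTop.mp this
    refine ⟨N, fun n hn m hm => ?_⟩
    rw [hd]
    have ig := fun n => Qr_int (es_pos n) hg
    have is : ∀ n, Integrable (Qr (es n) (fun x => f x - g x)) μI := fun n => Qr_int (es_pos n) (hf.sub hg)
    have j1 : ∀ n, Integrable (fun t => |Qr (es n) g t - H t|) μI := fun n => ((ig n).sub hH).abs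
    calc ∫ t, |Qr (es n) f t - Qr (es m) f t| ∂μI
        ≤ ∫ t, ((|Qr (es n) (fun x => f x - g x) t| + |Qr (es m) (fun x => f x - g x) t|) +
            (|Qr (es n) g t - H t| + |Qr (es m) g t - H t|)) ∂μI := by
          apply integral_mono ((hi n).sub (hi m)).abs
            (((is n).abs.add (is m).abs).add ((j1 n).add (j1 m)))
          intro t
          show |Qr (es n) f t - Qr (es m) f t| ≤ (|Qr (es n) (fun x => f x - g x) t| + |Qr (es m) (fun x => f x - g x) t|) + (|Qr (es n) g t - H t| + |Qr (es m) g t - H t|)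
          rw [Qr_sub (es_pos n) hf hg, Qr_sub (es_pos m) hf hg]
          have e : Qr (es n) f t - Qr (es m) f t = ((Qr (es n) f t - Qr (es n) g t) - (Qr (es m) f t - Qr (es m) g t))
            + ((Qr (es n) g t - H t) - (Qr (es m) g t - H t)) := by ring
          rw [e]
          exact (abs_add_le _ _).trans (add_le_add (abs_sub _ _) (abs_sub _ _))
      _ = (∫ t, |Qr (es n) (fun x => f x - g x) t| ∂μI + ∫ t, |Qr (es m) (fun x => f x - g x) t| ∂μI) +
          (∫ t, |Qr (es n) g t - H t| ∂μI + ∫ t, |Qr (es m) g t - H t| ∂μI) := by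
          have k1 : Integrable (fun t => |Qr (es n) (fun x => f x - g x) t| + |Qr (es m) (fun x => f x - g x) t|) μI := (is n).abs.add (is m).abs
          have k2 : Integrable (fun t => |Qr (es n) g t - H t| + |Qr (es m) g t - H t|) μI := (j1 n).add (j1 m)
          rw [integral_add k1 k2, integral_add (is n).abs (is m).abs,
            integral_add (j1 n) (j1 m)]
      _ < η := by linarith [happ n, happ m, hN n hn, hN m hm]
  obtain ⟨U, hU⟩ := cauchySeq_tendsto_of_complete hc
  have hUi : Integrable U μI := L1.integrable_coeFn U
  refine ⟨U, hUi, ?_⟩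
  have := tendsto_iff_dist_tendsto_zero.mp hU
  refine this.congr fun n => ?_
  have e : U = hUi.toL1 U := (Integrable.toL1_coeFn U hUi).symm
  conv_lhs => rw [e]
  rw [dist_eq_norm, hu]; simp only
  rw [← Integrable.toL1_sub, L1.norm_of_fun_eq_integral_norm]
  rfl

lemma poly_approx {k : ℝ → ℝ} (hk : Measurable k) {M : ℝ} (hM : ∀ x, |k x| ≤ M) {η : ℝ} (hη : 0 < η) :
    ∃ p : Polynomial ℝ, ∫ x, (k x - p.eval x)^2 ∂μI ≤ η := by
  have hmem : MemLp k (ENNReal.ofReal 2) μI :=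
    MemLp.of_bound hk.aestronglyMeasurable M (Eventually.of_forall hM)
  haveI : μI.Regular := by infer_instance
  obtain ⟨g, -, hg, hgc, hgm⟩ := hmem.exists_hasCompactSupport_integral_rpow_sub_le (by norm_num) (show 0 < η/4 by positivity)
  obtain ⟨p, hp⟩ := exists_polynomial_near_of_continuousOn (-1) 1 g hgc.continuousOn (min 1 (η/8)) (by positivity)
  refine ⟨p, ?_⟩
  have e2 : ∀ x, ‖k x - g x‖ ^ (2:ℝ) = (k x - g x)^2 := by
    intro x; rw [Real.rpow_two, Real.norm_eq_abs, sq_abs]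
  simp_rw [e2] at hg
  have ikg : Integrable (fun x => (k x - g x)^2) μI := by
    rw [ENNReal.ofReal_ofNat] at hmem hgm
    exact (hmem.sub hgm).integrable_sq
  calc ∫ x, (k x - p.eval x)^2 ∂μI ≤ ∫ x, (2 * (k x - g x)^2 + η/4) ∂μI := by
        apply integral_mono_of_nonneg (Eventually.of_forall fun x => sq_nonneg _)
          ((ikg.const_mul 2).add (integrable_const _))
        refine ae_μI fun x hx => ?_
        have h1 := hp x (Ioo_subset_Icc_self hx)
        have h2 : |p.eval x - g x| ≤ 1 := h1.le.trans (min_le_left _ _)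
        have h3 : |p.eval x - g x| ≤ η/8 := h1.le.trans (min_le_right _ _)
        have h4 : (p.eval x - g x)^2 ≤ η/8 := by
          rw [← sq_abs]; nlinarith [abs_nonneg (p.eval x - g x)]
        show (k x - p.eval x)^2 ≤ 2 * (k x - g x)^2 + η/4
        nlinarith [sq_nonneg ((k x - g x) + (p.eval x - g x))]
    _ = 2 * ∫ x, (k x - g x)^2 ∂μI + η/4 * 2 := by
        rw [integral_add (ikg.const_mul 2) (integrable_const _), integral_const_mul]
        simp [μI_univ]; ring
    _ ≤ η := by linarith

lemma log_div_bound {a δ : ℝ} (hδ : 0 < δ) :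
    |a| * max (Real.log (|a|/δ)) 0 ≤ |a| * max (Real.log |a|) 0 + |a| * |Real.log δ| := by
  rw [← mul_add]
  rcases eq_or_lt_of_le (abs_nonneg a) with ha | ha
  · rw [← ha]; simp
  apply mul_le_mul_of_nonneg_left _ (abs_nonneg a)
  rw [Real.log_div ha.ne' hδ.ne']
  apply max_le
  · linarith [le_max_left (Real.log |a|) 0, neg_le_abs (Real.log δ)]
  · positivity

theorem good_of_LlogL {f : ℝ → ℝ} (hm : Measurable f) (hf : Integrable f μI)
    (hl : Integrable (fun x => |f x| * max (Real.log |f x|) 0) μI) : Good f := by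
  apply good_of_approx hf
  intro η hη
  have hK : 0 < KK := by unfold KK; have := Real.cos_one_pos; positivity
  have hpi := Real.pi_pos
  -- choose delta
  set δ : ℝ := η / (4 * Real.pi * (2 * KK)) with hδ
  have hδp : 0 < δ := by positivity
  have hδe : Real.pi * (δ * (2 * KK)) = η / 4 := by rw [hδ]; field_simp
  -- truncation
  set A : ℕ → Set ℝ := fun N => {x | (N:ℝ) * sqw x < |f x|} with hA
  have hAm : ∀ N, MeasurableSet (A N) := fun N =>
    measurableSet_lt (sqw_continuous.measurable.const_mul _) hm.abs
  set W : ℝ → ℝ := fun x => |f x| * max (Real.log (|f x|/δ)) 0 with hW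
  have hWm : Measurable W := hm.abs.mul ((Real.measurable_log.comp (hm.abs.div_const _)).max measurable_const)
  have hW0 : ∀ x, 0 ≤ W x := fun x => mul_nonneg (abs_nonneg _) (le_max_right _ _)
  have hWi : Integrable W μI := by
    refine (hl.add (hf.abs.mul_const |Real.log δ|)).mono' hWm.aestronglyMeasurable (Eventually.of_forall fun x => ?_)
    rw [Real.norm_eq_abs, abs_of_nonneg (hW0 x)]
    exact log_div_bound hδp
  have hlim : Tendsto (fun N => ∫ x, (A N).indicator W x ∂μI) atTop (𝓝 0) := by
    have := tendsto_integral_of_dominated_convergence (μ := μI) (F := fun N => (A N).indicator W)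
      (f := fun _ => 0) W (fun N => (hWm.indicator (hAm N)).aestronglyMeasurable) hWi ?_ ?_
    · simpa using this
    · intro N
      refine Eventually.of_forall fun x => ?_
      rw [Real.norm_eq_abs]
      by_cases hx : x ∈ A N
      · rw [indicator_of_mem hx, abs_of_nonneg (hW0 x)]
      · rw [indicator_of_notMem hx, abs_zero]; exact hW0 x
    · refine ae_μI fun x hx => ?_
      have hs : 0 < sqw x := Real.sqrt_pos.mpr (by nlinarith [hx.1, hx.2])
      obtain ⟨N0, hN0⟩ := exists_nat_ge (|f x| / sqw x)
      rw [div_le_iff₀ hs] at hN0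
      refine tendsto_const_nhds.congr' ?_
      filter_upwards [eventually_ge_atTop N0] with N hN
      rw [indicator_of_notMem]
      intro hxA
      have h1 : (N:ℝ) * sqw x < |f x| := hxA
      have h2 : (N0:ℝ) * sqw x ≤ N * sqw x := by gcongr
      linarith
  obtain ⟨N, hN⟩ := ((tendsto_order.mp hlim).2 (η/(4 * Real.pi)) (by positivity)).exists
  -- the bounded part
  set k : ℝ → ℝ := (A N)ᶜ.indicator (fun x => f x / sqw x) with hk
  have hkm : Measurable k := (hm.div sqw_continuous.measurable).indicator (hAm N).compl
  have hkb : ∀ x, |k x| ≤ N := by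
    intro x
    by_cases hx : x ∈ A N
    · rw [hk, indicator_of_notMem (by simpa using hx)]; simp
    · rw [hk, indicator_of_mem (by simpa using hx), abs_div, abs_of_nonneg (sqw_nonneg x)]
      have h1 : |f x| ≤ N * sqw x := not_lt.mp hx
      exact div_le_of_le_mul₀ (Real.sqrt_nonneg _) (by positivity) h1
  obtain ⟨p, hp⟩ := poly_approx hkm hkb (η := δ * (η / (4 * Real.pi))) (by positivity)
  have hpc := conv_poly p
  refine ⟨_, integrable_of_cont hpc.1, hpc.good, fun n => ?_⟩
  set h1 : ℝ → ℝ := (A N).indicator f with hh1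
  set h2 : ℝ → ℝ := fun x => sqw x * (k x - p.eval x) with hh2
  have i1 : Integrable h1 μI := hf.indicator (hAm N)
  have ik : Integrable k μI := Integrable.of_bound (C := N) hkm.aestronglyMeasurable (Eventually.of_forall hkb)
  have iks : Integrable (fun x => (k x - p.eval x)^2) μI := by
    have m1 : MemLp k 2 μI := MemLp.of_bound hkm.aestronglyMeasurable N (Eventually.of_forall hkb)
    have m2 : MemLp (fun x => p.eval x) 2 μI := by
      have hpc : Continuous fun x => p.eval x := p.continuous
      rw [memLp_two_iff_integrable_sq hpc.aestronglyMeasurable]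
      exact integrable_of_cont (by fun_prop)
    exact (m1.sub m2).integrable_sq
  have hsq1 : ∀ x, sqw x ≤ 1 := by
    intro x; unfold sqw; rw [Real.sqrt_le_one]; nlinarith [sq_nonneg x]
  have i2 : Integrable h2 μI := by
    have : Integrable (fun x => k x - p.eval x) μI := ik.sub (integrable_of_cont p.continuous)
    exact this.bdd_mul (c := 1) sqw_continuous.aestronglyMeasurable (Eventually.of_forall fun x => by
      rw [Real.norm_eq_abs, abs_of_nonneg (sqw_nonneg x)]; exact hsq1 x)
  have esum : ∀ t, Qr (es n) (fun x => f x - sqw x * p.eval x) t = Qr (es n) h1 t + Qr (es n) h2 t := by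
    intro t
    rw [← Qr_add (es_pos n) i1 i2]
    unfold Qr
    apply integral_congr_ae
    refine ae_μI fun x hx => ?_
    have hs : 0 < sqw x := Real.sqrt_pos.mpr (by nlinarith [hx.1, hx.2])
    simp only
    congr 1
    rw [hh1, hh2, hk]
    by_cases hx : x ∈ A N
    · rw [indicator_of_mem hx]; simp only
      rw [indicator_of_notMem (by simpa using hx)]; ring
    · rw [indicator_of_notMem hx]; simp only
      rw [indicator_of_mem (by simpa using hx)]; field_simp; ring
  have b1 : ∫ t, |Qr (es n) h1 t| ∂μI ≤ Real.pi * (∫ x, (A N).indicator W x ∂μI + δ * (2 * KK)) := by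
    apply L1bound (es_pos n) hδp.le i1 (hWi.indicator (hAm N))
    intro x q hq
    by_cases hx : x ∈ A N
    · rw [hh1, indicator_of_mem hx, indicator_of_mem hx]
      exact young_log hδp hq
    · rw [hh1, indicator_of_notMem hx, indicator_of_notMem hx]
      simp; positivity
  have b2 : ∫ t, |Qr (es n) h2 t| ∂μI ≤ Real.pi * (∫ x, (k x - p.eval x)^2/δ ∂μI + δ * (2 * KK)) := by
    apply L1bound (es_pos n) hδp.le i2 (iks.div_const _)
    intro x q hq
    refine (young_sq hδp hq).trans ?_
    have hle : (h2 x)^2 ≤ (k x - p.eval x)^2 := by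
      show (sqw x * (k x - p.eval x))^2 ≤ _
      rw [mul_pow]
      have : sqw x ^2 ≤ 1 := pow_le_one₀ (sqw_nonneg x) (hsq1 x)
      nlinarith [sq_nonneg (k x - p.eval x)]
    have := div_le_div_of_nonneg_right hle hδp.le
    linarith
  calc ∫ t, |Qr (es n) (fun x => f x - sqw x * p.eval x) t| ∂μI
      ≤ ∫ t, (|Qr (es n) h1 t| + |Qr (es n) h2 t|) ∂μI := by
        apply integral_mono
        · exact (Qr_int (es_pos n) (hf.sub (integrable_of_cont hpc.1))).abs
        · exact (Qr_int (es_pos n) i1).abs.add (Qr_int (es_pos n) i2).abs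
        · intro t; simp only; rw [esum]; exact abs_add_le _ _
    _ = ∫ t, |Qr (es n) h1 t| ∂μI + ∫ t, |Qr (es n) h2 t| ∂μI :=
        integral_add (Qr_int (es_pos n) i1).abs (Qr_int (es_pos n) i2).abs
    _ ≤ η := by
        have c1 : Real.pi * ∫ x, (A N).indicator W x ∂μI ≤ η / 4 := by
          calc _ ≤ Real.pi * (η/(4*Real.pi)) := by gcongr
            _ = η/4 := by field_simp
        have c2 : Real.pi * ∫ x, (k x - p.eval x)^2/δ ∂μI ≤ η / 4 := by
          rw [integral_div]
          calc _ ≤ Real.pi * (δ * (η / (4 * Real.pi))/δ) := by gcongr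
            _ = η/4 := by field_simp
        nlinarith

lemma sub_ne_of_im (x : ℝ) {z : ℂ} (hz : z.im ≠ 0) : (x:ℂ) - z ≠ 0 := by
  intro h
  have := congrArg Complex.im h
  simp at this; exact hz this

lemma cauchy_int {f : ℝ → ℝ} (hf : Integrable f μI) {z : ℂ} (hz : z.im ≠ 0) :
    Integrable (fun x => (f x : ℂ) / ((x:ℂ) - z)) μI := by
  have hc : Continuous fun x : ℝ => ((x:ℂ) - z)⁻¹ :=
    Continuous.inv₀ (by fun_prop) fun x => sub_ne_of_im x hz
  simp_rw [div_eq_mul_inv]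
  refine hf.ofReal.mul_bdd (c := |z.im|⁻¹) hc.aestronglyMeasurable (Eventually.of_forall fun x => ?_)
  rw [norm_inv]
  exact inv_anti₀ (abs_pos.mpr hz) (im_le_norm x z)

lemma sqw_int : Integrable sqw μI := integrable_of_cont sqw_continuous

lemma res_int {z w : ℂ} (hz : z.im ≠ 0) (hw : w.im ≠ 0) (hzw : z ≠ w) :
    Integrable (fun t => (sqw t : ℂ) / ((t:ℂ) - z) * ((t:ℂ) - w)⁻¹) μI ∧
    ∫ t, (sqw t : ℂ) / ((t:ℂ) - z) * ((t:ℂ) - w)⁻¹ ∂μI = (Cz sqw z - Cz sqw w) / (z - w) := by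
  have hd : z - w ≠ 0 := sub_ne_zero.mpr hzw
  have e : (fun t : ℝ => (sqw t : ℂ) / ((t:ℂ) - z) * ((t:ℂ) - w)⁻¹) =
      fun t : ℝ => ((sqw t : ℂ) / ((t:ℂ) - z) - (sqw t : ℂ) / ((t:ℂ) - w)) / (z - w) := by
    ext t
    have h1 := sub_ne_of_im t hz
    have h2 := sub_ne_of_im t hw
    field_simp; ring
  rw [e]
  have i1 := cauchy_int sqw_int hz
  have i2 := cauchy_int sqw_int hw
  refine ⟨(i1.sub i2).div_const _, ?_⟩
  rw [integral_div, integral_sub i1 i2]; rfl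

def Jk (z : ℂ) (ε x : ℝ) : ℂ :=
  ((Cz sqw z - Cz sqw (x + ε * Complex.I)) / (z - (x + ε * Complex.I)) +
   (Cz sqw z - (starRingEnd ℂ) (Cz sqw (x + ε * Complex.I))) / (z - (x - ε * Complex.I))) / 2

lemma inner_eq {z : ℂ} {ε : ℝ} (hε : 0 < ε) (hz : ε < z.im) (x : ℝ) :
    ∫ t, (sqw t : ℂ) / ((t:ℂ) - z) * (qk ε (t - x) : ℂ) ∂μI = Jk z ε x := by
  set w : ℂ := x + ε * Complex.I with hw
  have hcw : (starRingEnd ℂ) w = x - ε * Complex.I := by simp [hw, sub_eq_add_neg]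
  have wim : w.im = ε := by simp [hw]
  have cim : ((starRingEnd ℂ) w).im = -ε := by rw [Complex.conj_im, wim]
  have e : ∀ t : ℝ, (sqw t : ℂ) / ((t:ℂ) - z) * (qk ε (t - x) : ℂ) =
     ((sqw t : ℂ) / ((t:ℂ) - z) * ((t:ℂ) - w)⁻¹ + (sqw t : ℂ) / ((t:ℂ) - z) * ((t:ℂ) - (starRingEnd ℂ) w)⁻¹) / 2 := by
    intro t
    have h1 := inv_eq_qp hε t x
    have h2 := congrArg (starRingEnd ℂ) h1
    rw [← hw] at h1 h2
    simp only [map_inv₀, map_sub, map_add, map_mul, Complex.conj_ofReal, Complex.conj_I] at h2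
    rw [h1, h2]; ring
  simp_rw [e]
  have hz0 : z.im ≠ 0 := by linarith
  obtain ⟨a1, b1⟩ := res_int (z := z) (w := w) hz0 (by rw [wim]; exact hε.ne') (by
    intro h; rw [h, wim] at hz; linarith)
  obtain ⟨a2, b2⟩ := res_int (z := z) (w := (starRingEnd ℂ) w) hz0 (by rw [cim]; linarith) (by
    intro h; rw [h, cim] at hz; linarith)
  rw [integral_div, integral_add a1 a2, b1, b2, Cz_conj, hcw]
  rfl

lemma Jk_bound {z : ℂ} {ε : ℝ} (hε : 0 < ε) (hz : 2 * ε ≤ z.im) (x : ℝ) :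
    ‖Jk z ε x‖ ≤ 4 * Real.pi / z.im := by
  have hzi : 0 < z.im := by linarith
  have hS : ∀ w : ℂ, w.im ≠ 0 → ‖Cz sqw w‖ ≤ Real.pi := fun w hw => (S_prop w hw).1
  have h1 := hS z hzi.ne'
  have h2 := hS (x + ε * Complex.I) (by simpa using hε.ne')
  have d1 : z.im/2 ≤ ‖z - (x + ε * Complex.I)‖ := by
    have := Complex.abs_im_le_norm (z - (x + ε * Complex.I))
    simp at this
    linarith [le_abs_self (z.im - ε)]
  have d2 : z.im/2 ≤ ‖z - (x - ε * Complex.I)‖ := by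
    have := Complex.abs_im_le_norm (z - (x - ε * Complex.I))
    simp at this
    linarith [le_abs_self (z.im + ε)]
  have k : ∀ a b c : ℂ, ‖a‖ ≤ Real.pi → ‖b‖ ≤ Real.pi → z.im/2 ≤ ‖c‖ → ‖(a - b)/c‖ ≤ 4 * Real.pi / z.im := by
    intro a b c ha hb hc
    rw [norm_div]
    calc ‖a - b‖/‖c‖ ≤ (2 * Real.pi) / (z.im/2) := by
          have := norm_sub_le a b
          have := Real.pi_pos
          gcongr
          linarith
      _ = _ := by field_simp; ring
  unfold Jk
  rw [norm_div, Complex.norm_ofNat]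
  have a1 := k _ _ _ h1 h2 d1
  have a2 := k _ ((starRingEnd ℂ) (Cz sqw (x + ε * Complex.I))) _ h1 (by rw [Complex.norm_conj]; exact h2) d2
  have := norm_add_le ((Cz sqw z - Cz sqw (x + ε * Complex.I)) / (z - (x + ε * Complex.I)))
   ((Cz sqw z - (starRingEnd ℂ) (Cz sqw (x + ε * Complex.I))) / (z - (x - ε * Complex.I)))
  linarith

lemma Jk_lim {z : ℂ} (hz : 0 < z.im) {x : ℝ} (hx : x ∈ Ioo (-1:ℝ) 1) :
    Tendsto (fun ε : ℝ => Jk z ε x) (𝓝[>] 0) (𝓝 ((Cz sqw z + Real.pi * x) / (z - x))) := by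
  have hpi : (Real.pi:ℂ) ≠ 0 := by exact_mod_cast Real.pi_ne_zero
  have hne : z - x ≠ 0 := by
    have := sub_ne_of_im x hz.ne'
    exact sub_ne_zero.mpr fun h => this (by rw [h]; ring)
  have c1 : Tendsto (fun ε : ℝ => (x:ℂ) + ε * Complex.I) (𝓝[>] 0) (𝓝 x) := by
    have : Continuous fun ε : ℝ => (x:ℂ) + ε * Complex.I := by fun_prop
    have := this.tendsto 0
    simp only [Complex.ofReal_zero, zero_mul, add_zero] at this
    exact this.mono_left nhdsWithin_le_nhds
  have c2 : Tendsto (fun ε : ℝ => (x:ℂ) - ε * Complex.I) (𝓝[>] 0) (𝓝 x) := by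
    have : Continuous fun ε : ℝ => (x:ℂ) - ε * Complex.I := by fun_prop
    have := this.tendsto 0
    simp only [Complex.ofReal_zero, zero_mul, sub_zero] at this
    exact this.mono_left nhdsWithin_le_nhds
  have c3 : Tendsto (fun ε : ℝ => Cz sqw (x + ε * Complex.I)) (𝓝[>] 0) (𝓝 (Real.pi * (sqw x * Complex.I - x))) := by
    refine (((R_lim hx).sub c1).const_mul (Real.pi:ℂ)).congr fun ε => ?_
    field_simp; ring
  have c4 := (Complex.continuous_conj.tendsto _).comp c3
  have := (((c3.const_sub (Cz sqw z)).div (c1.const_sub z) hne).add ((c4.const_sub (Cz sqw z)).div (c2.const_sub z) hne)).div_const 2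
  have e : ((Cz sqw z + Real.pi * x) / (z - x)) = ((Cz sqw z - Real.pi * (sqw x * Complex.I - x)) / (z - x) +
          (Cz sqw z - (starRingEnd ℂ) (Real.pi * (sqw x * Complex.I - x))) / (z - x)) / 2 := by
    simp only [map_sub, map_mul, Complex.conj_ofReal, Complex.conj_I]
    field_simp; ring
  rw [e]
  exact this

theorem lemE {f H : ℝ → ℝ} (hf : Integrable f μI) (hH : Integrable H μI)
    (hlim : Tendsto (fun n => ∫ t, |Qr (es n) f t - H t| ∂μI) atTop (𝓝 0)) {z : ℂ} (hz : 0 < z.im) :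
    Cz (fun t => sqw t * H t) z =
      Real.pi * ∫ x, (f x : ℂ) ∂μI + Real.pi * (Cz sqw z / Real.pi + z) * Cz f z := by
  have hpi : (Real.pi:ℂ) ≠ 0 := by exact_mod_cast Real.pi_ne_zero
  have gc : Continuous fun t : ℝ => (sqw t : ℂ) / ((t:ℂ) - z) :=
    Continuous.div (Complex.continuous_ofReal.comp sqw_continuous) (by fun_prop) fun t => sub_ne_of_im t hz.ne'
  have sq1 : ∀ x, sqw x ≤ 1 := by
    intro x; unfold sqw; rw [Real.sqrt_le_one]; nlinarith [sq_nonneg x]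
  have gb : ∀ t : ℝ, ‖(sqw t : ℂ) / ((t:ℂ) - z)‖ ≤ 1 / z.im := by
    intro t
    rw [norm_div, Complex.norm_real, Real.norm_eq_abs, abs_of_nonneg (sqw_nonneg t)]
    have := im_le_norm t z
    rw [abs_of_pos hz] at this
    exact div_le_div₀ zero_le_one (sq1 t) hz this
  have gi := integrable_of_cont gc
  have gmul : ∀ u : ℝ → ℝ, Integrable u μI → Integrable (fun t => (sqw t : ℂ) / ((t:ℂ) - z) * (u t : ℂ)) μI := by
    intro u hu
    exact hu.ofReal.bdd_mul gc.aestronglyMeasurable (Eventually.of_forall gb)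
  have L : Tendsto (fun n => ∫ t, (sqw t : ℂ) / ((t:ℂ) - z) * (Qr (es n) f t : ℂ) ∂μI) atTop
      (𝓝 (∫ t, (sqw t : ℂ) / ((t:ℂ) - z) * (H t : ℂ) ∂μI)) := by
    rw [tendsto_iff_norm_sub_tendsto_zero]
    refine squeeze_zero (fun n => norm_nonneg _) (g := fun n => 1/z.im * ∫ t, |Qr (es n) f t - H t| ∂μI) (fun n => ?_) ?_
    · have iq := Qr_int (es_pos n) hf
      rw [← integral_sub (gmul _ iq) (gmul _ hH), ← integral_const_mul]
      apply norm_integral_le_of_norm_le ((iq.sub hH).abs.const_mul _)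
      refine Eventually.of_forall fun t => ?_
      rw [← mul_sub, norm_mul, ← Complex.ofReal_sub, Complex.norm_real]
      exact mul_le_mul_of_nonneg_right (gb t) (norm_nonneg _)
    · simpa using hlim.const_mul (1/z.im)
  have Rr : Tendsto (fun n => - ∫ x, (f x : ℂ) * (∫ t, (sqw t : ℂ) / ((t:ℂ) - z) * (qk (es n) (t - x) : ℂ) ∂μI) ∂μI) atTop
      (𝓝 (- ∫ x, (f x : ℂ) * ((Cz sqw z + Real.pi * x) / (z - x)) ∂μI)) := by
    apply Tendsto.neg
    have hev : ∀ᶠ n in atTop, 2 * es n < z.im := by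
      have h1 : Tendsto (fun n => 2 * es n) atTop (𝓝 (2*0)) := (es_tendsto.mono_right nhdsWithin_le_nhds).const_mul 2
      rw [mul_zero] at h1
      exact (tendsto_order.mp h1).2 _ hz
    have key : Tendsto (fun n => ∫ x, (f x : ℂ) * Jk z (es n) x ∂μI) atTop
      (𝓝 (∫ x, (f x : ℂ) * ((Cz sqw z + Real.pi * x) / (z - x)) ∂μI)) := by
      apply tendsto_integral_filter_of_dominated_convergence (fun x => |f x| * (4 * Real.pi / z.im))
      · filter_upwards [hev] with n hn
        have hc := Cz_line_cont (es_pos n) sqw_int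
        have hJ : Continuous (fun x : ℝ => Jk z (es n) x) := by
          unfold Jk
          refine Continuous.div_const (Continuous.add (Continuous.div (by fun_prop) (by fun_prop) ?_) (Continuous.div ?_ (by fun_prop) ?_)) _
          · intro x h
            have := congrArg Complex.im h
            simp at this; linarith [es_pos n]
          · exact continuous_const.sub (Complex.continuous_conj.comp hc)
          · intro x h
            have := congrArg Complex.im h
            simp at this; linarith [es_pos n]
        exact hf.ofReal.aestronglyMeasurable.mul hJ.aestronglyMeasurable
      · filter_upwards [hev] with n hn
        refine Eventually.of_forall fun x => ?_
        rw [norm_mul, Complex.norm_real]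
        exact mul_le_mul_of_nonneg_left (Jk_bound (es_pos n) hn.le x) (norm_nonneg _)
      · exact hf.abs.mul_const _
      · refine ae_μI fun x hx => ?_
        exact ((Jk_lim hz hx).comp es_tendsto).const_mul _
    refine key.congr' ?_
    filter_upwards [hev] with n hn
    congr 1; ext x
    rw [inner_eq (es_pos n) (by linarith [es_pos n])]
  have heq := tendsto_nhds_unique L (Rr.congr fun n => (fubini (es_pos n) hf gi).symm)
  have i1 := cauchy_int hf hz.ne'
  calc Cz (fun t => sqw t * H t) z = ∫ t, (sqw t : ℂ) / ((t:ℂ) - z) * (H t : ℂ) ∂μI := by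
        unfold Cz; congr 1; ext t; push_cast; ring
    _ = ∫ x, (Real.pi * (f x : ℂ) + Real.pi * (Cz sqw z / Real.pi + z) * ((f x : ℂ) / ((x:ℂ) - z))) ∂μI := by
        rw [heq, ← integral_neg]
        congr 1; ext x
        have h1 := sub_ne_of_im x hz.ne'
        have h2 : z - x ≠ 0 := fun h => h1 (by linear_combination -h)
        rw [← neg_sub (x:ℂ) z]
        field_simp
        ring
    _ = _ := by
        have j1 : Integrable (fun x => (Real.pi:ℂ) * (f x : ℂ)) μI := hf.ofReal.const_mul _
        rw [integral_add j1 (i1.const_mul _), integral_const_mul, integral_const_mul]; rfl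

lemma pk_dyadic {ε : ℝ} (hε : 0 < ε) (s : ℝ) : ∃ k : ℕ, |s| ≤ 2^k * ε ∧ pk ε s ≤ 4 / (4^k * ε) := by
  rcases le_or_gt |s| ε with h | h
  · refine ⟨0, by simpa using h, (pk_le hε s).trans ?_⟩
    simp only [pow_zero, one_mul]; gcongr; norm_num
  · have h1 : 1 ≤ |s|/ε := by rw [le_div_iff₀ hε]; linarith
    obtain ⟨n, hn1, hn2⟩ := exists_nat_pow_near h1 (one_lt_two (α := ℝ))
    rw [le_div_iff₀ hε] at hn1
    rw [div_lt_iff₀ hε] at hn2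
    refine ⟨n+1, hn2.le, ?_⟩
    unfold pk
    have e : (4:ℝ)/(4^(n+1) * ε) = ε / (2^n * ε)^2 := by
      rw [pow_succ, show (4:ℝ) = 2^2 by norm_num, ← pow_mul, mul_pow, ← pow_mul, mul_comm n 2]; field_simp
    rw [e]
    apply div_le_div_of_nonneg_left hε.le (by positivity)
    rw [← sq_abs s]
    have : (2^n * ε)^2 ≤ |s|^2 := pow_le_pow_left₀ (by positivity) hn1 2
    nlinarith [sq_nonneg ε]

lemma leb_abs {F : ℝ → ℝ} (hF : Integrable F) : ∀ᵐ t : ℝ,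
    Tendsto (fun ε : ℝ => ∫ x, |F x - F t| * pk ε (x - t)) (𝓝[>] 0) (𝓝 0) := by
  filter_upwards [IsUnifLocDoublingMeasure.ae_tendsto_average_norm_sub (μ := (volume : Measure ℝ)) hF.locallyIntegrable 1] with t ht
  set A : ℝ → ℝ := fun r => ∫ x in Metric.closedBall t r, |F x - F t| with hA
  have hA0 : ∀ r, 0 ≤ A r := fun r => integral_nonneg fun x => abs_nonneg _
  have hvol : ∀ r : ℝ, 0 ≤ r → volume.real (Metric.closedBall t r) = 2 * r := fun r hr => by
    rw [Measure.real, Real.volume_closedBall, ENNReal.toReal_ofReal (by positivity)]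
  have hgi : ∀ r, IntegrableOn (fun x => |F x - F t|) (Metric.closedBall t r) := fun r =>
    (hF.integrableOn.sub (integrableOn_const (by rw [Real.volume_closedBall]; exact ENNReal.ofReal_ne_top))).abs
  have ha : Tendsto (fun r => A r / r) (𝓝[>] 0) (𝓝 0) := by
    have h1 := ht (l := 𝓝[>] (0:ℝ)) (fun _ => t) id tendsto_id (by
      filter_upwards [self_mem_nhdsWithin] with r hr
      have : (0:ℝ) < r := hr
      simp [this.le])
    have h2 := h1.const_mul 2
    rw [mul_zero] at h2
    refine h2.congr' ?_
    filter_upwards [self_mem_nhdsWithin] with r hr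
    have hr : (0:ℝ) < r := hr
    rw [setAverage_eq, id, hvol r hr.le, smul_eq_mul]
    simp only [hA, Real.norm_eq_abs]
    field_simp
  have hAb : ∃ M : ℝ, ∀ r > 0, A r / r ≤ M := by
    have h1 := (tendsto_order.mp ha).2 1 one_pos
    rw [eventually_nhdsWithin_iff, Metric.eventually_nhds_iff] at h1
    obtain ⟨r0, hr0, h1⟩ := h1
    refine ⟨max 1 ((∫ x, |F x|) / r0 + 2 * |F t|), fun r hr => ?_⟩
    rcases lt_or_ge r r0 with h | h
    · refine le_max_of_le_left (h1 (y := r) ?_ hr).le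
      rw [Real.dist_eq, sub_zero, abs_of_pos hr]; exact h
    · apply le_max_of_le_right
      have hfin : volume (Metric.closedBall t r) ≠ ⊤ := by rw [Real.volume_closedBall]; exact ENNReal.ofReal_ne_top
      have hci : IntegrableOn (fun _ : ℝ => |F t|) (Metric.closedBall t r) := integrableOn_const hfin
      have hb : A r ≤ (∫ x, |F x|) + 2 * r * |F t| := by
        calc A r ≤ ∫ x in Metric.closedBall t r, (|F x| + |F t|) := by
              apply integral_mono (hgi r) (hF.abs.integrableOn.add hci)
              intro x; exact abs_sub _ _
          _ = (∫ x in Metric.closedBall t r, |F x|) + 2 * r * |F t| := by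
              rw [integral_add hF.abs.integrableOn hci, setIntegral_const, hvol r hr.le, smul_eq_mul]
          _ ≤ _ := by
              gcongr
              · exact Eventually.of_forall fun x => abs_nonneg _
              · exact hF.abs
              · exact Measure.restrict_le_self
      have hI : 0 ≤ ∫ x, |F x| := integral_nonneg fun x => abs_nonneg _
      rw [div_le_iff₀ hr]
      have : (∫ x, |F x|) ≤ (∫ x, |F x|) / r0 * r := by
        rw [div_mul_eq_mul_div, le_div_iff₀ hr0]; gcongr
      nlinarith
  obtain ⟨M, hM⟩ := hAb
  set c : ℕ → ℝ := fun k => 4 * (1/2)^k with hc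
  have hcs : Summable c := (summable_geometric_of_lt_one (by norm_num) (by norm_num)).mul_left 4
  have hT : Tendsto (fun ε : ℝ => ∑' k : ℕ, c k * (A (2^k * ε) / (2^k * ε))) (𝓝[>] 0) (𝓝 0) := by
    have : Tendsto (fun ε : ℝ => ∑' k : ℕ, c k * (A (2^k * ε) / (2^k * ε))) (𝓝[>] 0) (𝓝 (∑' k : ℕ, c k * 0)) := by
      apply tendsto_tsum_of_dominated_convergence (bound := fun k => c k * M) (hcs.mul_right M)
      · intro k
        refine (ha.comp ?_).const_mul _
        refine tendsto_nhdsWithin_iff.mpr ⟨?_, ?_⟩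
        · have : Continuous fun ε : ℝ => 2^k * ε := by fun_prop
          have := this.tendsto 0
          simp only [mul_zero] at this
          exact this.mono_left nhdsWithin_le_nhds
        · filter_upwards [self_mem_nhdsWithin] with ε hε
          have : (0:ℝ) < ε := hε
          exact mem_Ioi.mpr (by positivity)
      · filter_upwards [self_mem_nhdsWithin] with ε hε k
        have hε : (0:ℝ) < ε := hε
        have hp : (0:ℝ) < 2^k * ε := by positivity
        have h0 : 0 ≤ A (2^k * ε) / (2^k * ε) := div_nonneg (hA0 _) hp.le
        have hck : 0 ≤ c k := by positivity
        rw [Real.norm_eq_abs, abs_of_nonneg (mul_nonneg hck h0)]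
        exact mul_le_mul_of_nonneg_left (hM _ hp) hck
    simpa using this
  refine squeeze_zero' ?_ ?_ hT
  · filter_upwards [self_mem_nhdsWithin] with ε hε
    exact integral_nonneg fun x => mul_nonneg (abs_nonneg _) (pk_nonneg hε _)
  · filter_upwards [self_mem_nhdsWithin] with ε hε
    have hε : (0:ℝ) < ε := hε
    have hp : ∀ k : ℕ, (0:ℝ) < 2^k * ε := fun k => by positivity
    have hterm0 : ∀ k, 0 ≤ c k * (A (2^k * ε) / (2^k * ε)) := fun k =>
      mul_nonneg (by positivity) (div_nonneg (hA0 _) (hp k).le)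
    have hsm : Summable fun k => c k * (A (2^k * ε) / (2^k * ε)) :=
      Summable.of_nonneg_of_le hterm0 (fun k => mul_le_mul_of_nonneg_left (hM _ (hp k)) (by positivity)) (hcs.mul_right M)
    have hmeas : AEStronglyMeasurable (fun x => |F x - F t| * pk ε (x - t)) volume := by
      have h1 : AEStronglyMeasurable (fun x => |F x - F t|) volume := (hF.aestronglyMeasurable.sub aestronglyMeasurable_const).norm
      exact h1.mul ((pk_cont hε).comp (by fun_prop)).aestronglyMeasurable
    rw [integral_eq_lintegral_of_nonneg_ae (Eventually.of_forall fun x => mul_nonneg (abs_nonneg _) (pk_nonneg hε _)) hmeas]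
    apply ENNReal.toReal_le_of_le_ofReal (tsum_nonneg hterm0)
    rw [ENNReal.ofReal_tsum_of_nonneg hterm0 hsm]
    calc ∫⁻ x, ENNReal.ofReal (|F x - F t| * pk ε (x - t))
        ≤ ∫⁻ x, ∑' k : ℕ, (Metric.closedBall t (2^k * ε)).indicator
            (fun x => ENNReal.ofReal (4/(4^k * ε)) * ENNReal.ofReal (|F x - F t|)) x := by
          apply lintegral_mono
          intro x
          obtain ⟨k, hk1, hk2⟩ := pk_dyadic hε (x - t)
          refine le_trans ?_ (ENNReal.le_tsum k)
          rw [indicator_of_mem (by rw [Metric.mem_closedBall, Real.dist_eq]; exact hk1),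
            ← ENNReal.ofReal_mul (by positivity)]
          apply ENNReal.ofReal_le_ofReal
          rw [mul_comm]
          exact mul_le_mul_of_nonneg_right hk2 (abs_nonneg _)
      _ = ∑' k : ℕ, ∫⁻ x, (Metric.closedBall t (2^k * ε)).indicator
            (fun x => ENNReal.ofReal (4/(4^k * ε)) * ENNReal.ofReal (|F x - F t|)) x := by
          apply lintegral_tsum
          intro k
          refine AEMeasurable.indicator (AEMeasurable.const_mul ?_ _) Metric.isClosed_closedBall.measurableSet
          exact ((hF.aestronglyMeasurable.sub aestronglyMeasurable_const).norm).aemeasurable.ennreal_ofReal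
      _ = ∑' k : ℕ, ENNReal.ofReal (c k * (A (2^k * ε) / (2^k * ε))) := by
          congr 1; ext1 k
          rw [lintegral_indicator Metric.isClosed_closedBall.measurableSet,
            lintegral_const_mul' _ _ ENNReal.ofReal_ne_top,
            ← ofReal_integral_eq_lintegral_ofReal (hgi _) (Eventually.of_forall fun x => abs_nonneg _),
            ← ENNReal.ofReal_mul (by positivity)]
          congr 1
          have e : (4:ℝ)^k = 2^k * 2^k := by rw [← mul_pow]; norm_num
          simp only [hc, e, one_div, inv_pow]
          field_simp
          rfl

def trunc (ε : ℝ) (f : ℝ → ℝ) (t : ℝ) : ℝ :=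
  ∫ x in {x : ℝ | x ∈ Set.Ioo (-1 : ℝ) 1 ∧ ε ≤ |x - t|}, f x / (x - t)

def kap (ε s : ℝ) : ℝ := if ε ≤ |s| then 1/s else 0

lemma kap_meas (ε : ℝ) : Measurable (kap ε) := by
  unfold kap
  exact Measurable.ite (measurableSet_le measurable_const measurable_norm) (by fun_prop) measurable_const

lemma dk_le {ε : ℝ} (hε : 0 < ε) (s : ℝ) : |qk ε s - kap ε s| ≤ pk ε s := by
  have hd := den_pos hε s
  unfold kap qk pk
  split_ifs with h
  · have hs : 0 < |s| := by linarith
    have hs0 : s ≠ 0 := abs_pos.mp hs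
    have e : s/(s^2+ε^2) - 1/s = -(ε^2/(s * (s^2+ε^2))) := by field_simp; ring
    rw [e, abs_neg, abs_div, abs_mul, abs_of_pos hd, abs_of_nonneg (sq_nonneg ε)]
    rw [div_le_div_iff₀ (by positivity) hd]
    have : 0 ≤ ε * (s^2+ε^2) := by positivity
    nlinarith
  · rw [sub_zero, abs_div, abs_of_pos hd]
    gcongr
    exact (not_le.mp h).le

lemma dk_int {ε : ℝ} (hε : 0 < ε) (t : ℝ) : Integrable (fun x => qk ε (x-t) - kap ε (x-t)) ∧
    ∫ x, (qk ε (x-t) - kap ε (x-t)) = 0 := by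
  have hm : Measurable fun x => qk ε (x-t) - kap ε (x-t) :=
    ((qk_cont hε).measurable.sub (kap_meas ε)).comp (by fun_prop)
  refine ⟨(pk_integrable hε t).1.mono' hm.aestronglyMeasurable (Eventually.of_forall fun x => dk_le hε _), ?_⟩
  rw [integral_sub_right_eq_self (fun x => qk ε x - kap ε x) t]
  have h := integral_neg_eq_self (fun x => qk ε x - kap ε x) volume
  have e : ∀ x, qk ε (-x) - kap ε (-x) = -(qk ε x - kap ε x) := by
    intro x; rw [qk_neg]; unfold kap; rw [abs_neg]; split_ifs <;> ring
  simp_rw [e] at h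
  rw [integral_neg] at h
  linarith

theorem leb_pts {f : ℝ → ℝ} (hf : Integrable f μI) : ∀ᵐ t ∂μI,
    Tendsto (fun ε => Pr ε f t) (𝓝[>] 0) (𝓝 (Real.pi * f t)) ∧
    Tendsto (fun ε => Qr ε f t - trunc ε f t) (𝓝[>] 0) (𝓝 0) := by
  set F : ℝ → ℝ := (Ioo (-1:ℝ) 1).indicator f with hFd
  have hF : Integrable F := (integrable_indicator_iff measurableSet_Ioo).mpr hf
  have conv : ∀ k : ℝ → ℝ, ∫ x, f x * k x ∂μI = ∫ x, F x * k x := by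
    intro k
    unfold μI
    rw [← integral_indicator measurableSet_Ioo]
    congr 1; ext x
    by_cases hx : x ∈ Ioo (-1:ℝ) 1
    · rw [indicator_of_mem hx, hFd, indicator_of_mem hx]
    · rw [indicator_of_notMem hx, hFd, indicator_of_notMem hx, zero_mul]
  unfold μI
  rw [ae_restrict_iff' measurableSet_Ioo]
  filter_upwards [leb_abs hF] with t ht htI
  have hFt : F t = f t := by rw [hFd, indicator_of_mem htI]
  have pint : ∀ ε : ℝ, 0 < ε → Integrable (fun x => F x * pk ε (x-t)) := fun ε hε =>
    hF.mul_bdd (c := 1/ε) ((pk_cont hε).comp (by fun_prop)).aestronglyMeasurable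
      (Eventually.of_forall fun x => by rw [Real.norm_eq_abs, abs_of_nonneg (pk_nonneg hε _)]; exact pk_le hε _)
  have gint : ∀ ε : ℝ, 0 < ε → Integrable (fun x => |F x - F t| * pk ε (x-t)) := by
    intro ε hε
    have : Integrable (fun x => F x * pk ε (x-t) - F t * pk ε (x-t)) := (pint ε hε).sub ((pk_integrable hε t).1.const_mul _)
    refine this.abs.congr (Eventually.of_forall fun x => ?_)
    show |_| = _
    rw [← sub_mul, abs_mul, abs_of_nonneg (pk_nonneg hε _)]
  constructor
  · rw [tendsto_iff_norm_sub_tendsto_zero]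
    refine squeeze_zero' (Eventually.of_forall fun ε => norm_nonneg _) ?_ ht
    filter_upwards [self_mem_nhdsWithin] with ε hε
    have hε : 0 < ε := hε
    obtain ⟨p1, p2⟩ := pk_integrable hε t
    unfold Pr
    rw [conv (fun x => pk ε (x-t)), ← p2, mul_comm (∫ x, pk ε (x-t)), ← integral_const_mul, ← integral_sub (pint ε hε) (p1.const_mul _)]
    apply norm_integral_le_of_norm_le (gint ε hε)
    refine Eventually.of_forall fun x => ?_
    rw [← hFt, ← sub_mul, norm_mul, Real.norm_eq_abs, Real.norm_eq_abs, abs_of_nonneg (pk_nonneg hε _)]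
  · rw [tendsto_zero_iff_norm_tendsto_zero]
    refine squeeze_zero' (Eventually.of_forall fun ε => norm_nonneg _) ?_ ht
    filter_upwards [self_mem_nhdsWithin] with ε hε
    have hε : 0 < ε := hε
    obtain ⟨p1, p2⟩ := dk_int hε t
    have q1 : Integrable (fun x => F x * qk ε (x-t)) :=
      hF.mul_bdd (c := 1/ε) ((qk_cont hε).comp (by fun_prop)).aestronglyMeasurable
        (Eventually.of_forall fun x => qk_le hε _)
    have k1 : Integrable (fun x => F x * kap ε (x-t)) := by
      refine hF.mul_bdd (c := 1/ε) ((kap_meas ε).comp (by fun_prop)).aestronglyMeasurable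
        (Eventually.of_forall fun x => ?_)
      unfold kap
      split_ifs with h
      · rw [norm_div, norm_one, Real.norm_eq_abs]; gcongr
      · rw [norm_zero]; positivity
    have tr : trunc ε f t = ∫ x, F x * kap ε (x-t) := by
      unfold trunc
      have hms : MeasurableSet {x : ℝ | x ∈ Ioo (-1:ℝ) 1 ∧ ε ≤ |x - t|} :=
        measurableSet_Ioo.inter (measurableSet_le measurable_const (g := fun x : ℝ => |x - t|) (by fun_prop))
      rw [← integral_indicator hms]
      congr 1; ext x
      unfold kap
      by_cases hx : x ∈ Ioo (-1:ℝ) 1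
      · by_cases h2 : ε ≤ |x - t|
        · rw [indicator_of_mem (show x ∈ {x : ℝ | x ∈ Ioo (-1:ℝ) 1 ∧ ε ≤ |x - t|} from ⟨hx, h2⟩), hFd, indicator_of_mem hx, if_pos h2]; ring
        · rw [indicator_of_notMem (fun h => h2 h.2), if_neg h2, mul_zero]
      · rw [indicator_of_notMem (fun h => hx h.1), hFd, indicator_of_notMem hx, zero_mul]
    unfold Qr
    rw [tr, conv (fun x => qk ε (x-t)), ← integral_sub q1 k1]
    have e : ∫ x, (F x * qk ε (x-t) - F x * kap ε (x-t)) =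
        ∫ x, ((F x * qk ε (x-t) - F x * kap ε (x-t)) - F t * (qk ε (x-t) - kap ε (x-t))) := by
      have i3 : Integrable (fun x => F x * qk ε (x-t) - F x * kap ε (x-t)) := q1.sub k1
      rw [integral_sub i3 (p1.const_mul _), integral_const_mul, p2]; ring
    rw [e]
    apply norm_integral_le_of_norm_le (gint ε hε)
    refine Eventually.of_forall fun x => ?_
    rw [← mul_sub, ← sub_mul, norm_mul, Real.norm_eq_abs, Real.norm_eq_abs]
    exact mul_le_mul_of_nonneg_left (dk_le hε _) (abs_nonneg _)

theorem real_core {f : ℝ → ℝ} (hf : Integrable f μI) (hg : Good f) : ∃ H : ℝ → ℝ, Integrable H μI ∧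
    ∀ᵐ t ∂μI, Tendsto (fun ε => trunc ε f t) (𝓝[>] 0) (𝓝 (H t)) ∧
      Tendsto (fun ε => trunc ε (fun x => sqw x * H x) t) (𝓝[>] 0)
        (𝓝 (Real.pi * (∫ x, f x ∂μI) - Real.pi^2 * (sqw t * f t))) := by
  obtain ⟨H, hH, hlim⟩ := hg
  have hpi : (Real.pi:ℂ) ≠ 0 := by exact_mod_cast Real.pi_ne_zero
  have hpr := Real.pi_ne_zero
  refine ⟨H, hH, ?_⟩
  have sq1 : ∀ x, sqw x ≤ 1 := by
    intro x; unfold sqw; rw [Real.sqrt_le_one]; nlinarith [sq_nonneg x]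
  have hh : Integrable (fun x => sqw x * H x) μI :=
    hH.bdd_mul (c := 1) sqw_continuous.aestronglyMeasurable (Eventually.of_forall fun x => by
      rw [Real.norm_eq_abs, abs_of_nonneg (sqw_nonneg x)]; exact sq1 x)
  filter_upwards [leb_pts hf, leb_pts hh, ae_μI (p := fun t => t ∈ Ioo (-1:ℝ) 1) fun t ht => ht] with t h1 h2 ht
  have hs : 0 < sqw t := Real.sqrt_pos.mpr (by nlinarith [ht.1, ht.2])
  set R : ℝ → ℂ := fun ε => Cz sqw (t + ε * Complex.I) / Real.pi + (t + ε * Complex.I) with hR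
  have hRl : Tendsto R (𝓝[>] 0) (𝓝 (sqw t * Complex.I)) := R_lim ht
  have ha : Tendsto (fun ε => (R ε).re) (𝓝[>] 0) (𝓝 0) := by
    have := (Complex.continuous_re.tendsto _).comp hRl
    simpa [Function.comp_def] using this
  have hb : Tendsto (fun ε => (R ε).im) (𝓝[>] 0) (𝓝 (sqw t)) := by
    have := (Complex.continuous_im.tendsto _).comp hRl
    simpa [Function.comp_def] using this
  have key : ∀ ε : ℝ, 0 < ε →
      Pr ε (fun x => sqw x * H x) t = Real.pi * ((R ε).re * Pr ε f t + (R ε).im * Qr ε f t) ∧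
      Qr ε (fun x => sqw x * H x) t = Real.pi * (∫ x, f x ∂μI) + Real.pi * ((R ε).re * Qr ε f t - (R ε).im * Pr ε f t) := by
    intro ε hε
    have := lemE hf hH hlim (z := t + ε * Complex.I) (by simpa using hε)
    rw [Cz_eq hε hh, Cz_eq hε hf, integral_complex_ofReal] at this
    have hr := congrArg Complex.re this
    have hi := congrArg Complex.im this
    rw [show Cz sqw (t + ε * Complex.I) / Real.pi + (t + ε * Complex.I) = R ε from rfl] at hr hi
    simp at hr hi
    constructor
    · rw [hi]; ring
    · rw [hr]; ring
  have hQ : Tendsto (fun ε => Qr ε f t) (𝓝[>] 0) (𝓝 (H t)) := by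
    have h3 := ((h2.1.div_const Real.pi).sub (ha.mul h1.1)).div hb hs.ne'
    have e : (Real.pi * (sqw t * H t) / Real.pi - 0 * (Real.pi * f t)) / sqw t = H t := by field_simp; ring
    rw [e] at h3
    refine h3.congr' ?_
    filter_upwards [self_mem_nhdsWithin, (tendsto_order.mp hb).1 0 hs] with ε hε hbp
    show (Pr ε (fun x => sqw x * H x) t / Real.pi - (R ε).re * Pr ε f t) / (R ε).im = _
    rw [(key ε hε).1]
    have := hbp.ne'
    field_simp; ring
  have hQ2 : Tendsto (fun ε => Qr ε (fun x => sqw x * H x) t) (𝓝[>] 0)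
      (𝓝 (Real.pi * (∫ x, f x ∂μI) - Real.pi^2 * (sqw t * f t))) := by
    have h3 := (((ha.mul hQ).sub (hb.mul h1.1)).const_mul Real.pi).const_add (Real.pi * ∫ x, f x ∂μI)
    have e : Real.pi * (∫ x, f x ∂μI) + Real.pi * (0 * H t - sqw t * (Real.pi * f t)) =
      (Real.pi * (∫ x, f x ∂μI) - Real.pi^2 * (sqw t * f t)) := by ring
    rw [e] at h3
    refine h3.congr' ?_
    filter_upwards [self_mem_nhdsWithin] with ε hε
    rw [(key ε hε).2]
  constructor
  · have := hQ.sub h1.2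
    simpa using this
  · have := hQ2.sub h2.2
    simpa using this

lemma FHT_lim {f : ℝ → ℂ} {u v : ℝ → ℝ} (hu : Integrable u μI) (hv : Integrable v μI)
    (hae : ∀ᵐ x ∂μI, f x = u x + v x * Complex.I) {t a b : ℝ}
    (ha : Tendsto (fun ε => trunc ε u t) (𝓝[>] 0) (𝓝 a)) (hb : Tendsto (fun ε => trunc ε v t) (𝓝[>] 0) (𝓝 b)) :
    FHT f t = (Real.pi:ℂ)⁻¹ * (a + b * Complex.I) := by
  unfold FHT
  apply Tendsto.limUnder_eq
  have h := ((((Complex.continuous_ofReal.tendsto a).comp ha).add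
    (((Complex.continuous_ofReal.tendsto b).comp hb).mul_const Complex.I)).const_mul (Real.pi:ℂ)⁻¹)
  refine h.congr' ?_
  filter_upwards [self_mem_nhdsWithin] with ε hε
  have hε : 0 < ε := hε
  congr 1
  show (trunc ε u t : ℂ) + (trunc ε v t : ℂ) * Complex.I = _
  unfold trunc
  set s := {x : ℝ | x ∈ Set.Ioo (-1 : ℝ) 1 ∧ ε ≤ |x - t|} with hs
  have hms : MeasurableSet s :=
    measurableSet_Ioo.inter (measurableSet_le measurable_const (g := fun x : ℝ => |x - t|) (by fun_prop))
  have hsub : s ⊆ Ioo (-1:ℝ) 1 := fun x hx => hx.1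
  have hint : ∀ w : ℝ → ℝ, Integrable w μI → IntegrableOn (fun x => w x / (x - t)) s := by
    intro w hw
    have hw' : IntegrableOn w s := IntegrableOn.mono_set hw hsub
    simp_rw [div_eq_mul_inv]
    refine Integrable.mul_bdd (c := ε⁻¹) hw' (by fun_prop) ?_
    refine (ae_restrict_iff' hms).mpr (Eventually.of_forall fun x hx => ?_)
    rw [norm_inv, Real.norm_eq_abs]
    exact inv_anti₀ hε hx.2
  rw [← integral_complex_ofReal, ← integral_complex_ofReal, ← integral_mul_const, ← integral_add (hint u hu).ofReal ((hint v hv).ofReal.mul_const _)]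
  apply integral_congr_ae
  have : ∀ᵐ x ∂(volume.restrict s), f x = u x + v x * Complex.I := ae_restrict_of_ae_restrict_of_subset hsub hae
  filter_upwards [this] with x hx
  rw [hx]; push_cast; ring

lemma trunc_smul (c ε : ℝ) (f : ℝ → ℝ) (t : ℝ) : trunc ε (fun x => c * f x) t = c * trunc ε f t := by
  unfold trunc; rw [← integral_const_mul]; congr 1; ext x; ring

def phi (s : ℝ) : ℝ := s * max (Real.log s) 0

lemma phi_meas : Measurable phi := by
  unfold phi; exact measurable_id.mul (Real.measurable_log.max measurable_const)

lemma phi_nonneg {s : ℝ} (hs : 0 ≤ s) : 0 ≤ phi s := mul_nonneg hs (le_max_right _ _)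

lemma phi_mono {a b : ℝ} (ha : 0 ≤ a) (h : a ≤ b) : phi a ≤ phi b := by
  rcases eq_or_lt_of_le ha with h0 | h0
  · rw [← h0]; simp [phi]; exact phi_nonneg (ha.trans h)
  · unfold phi
    apply mul_le_mul h (max_le_max (Real.log_le_log h0 h) le_rfl) (le_max_right _ _) (ha.trans h)

lemma le_phi {s : ℝ} (hs : 0 ≤ s) : s ≤ Real.exp 1 + phi s := by
  rcases le_or_gt s (Real.exp 1) with h | h
  · linarith [phi_nonneg hs]
  · have : 1 ≤ Real.log s := by rw [Real.le_log_iff_exp_le (by linarith [Real.exp_pos 1])]; exact h.le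
    have h2 : s ≤ phi s := by
      unfold phi
      nlinarith [le_max_left (Real.log s) 0]
    linarith [Real.exp_pos 1]

lemma memLlogL_iff (f : ℝ → ℂ) : MemLlogL f ↔ AEStronglyMeasurable f μI ∧ Integrable (fun x => phi ‖f x‖) μI := Iff.rfl

lemma MemLlogL.integrable {f : ℝ → ℂ} (hf : MemLlogL f) : Integrable f μI := by
  obtain ⟨h1, h2⟩ := (memLlogL_iff f).mp hf
  refine ((integrable_const (Real.exp 1)).add h2).mono' h1 (Eventually.of_forall fun x => ?_)
  exact le_phi (norm_nonneg _)

lemma good_part {f : ℝ → ℂ} (hf : MemLlogL f) {u : ℝ → ℝ} (hu : Measurable u) (hle : ∀ᵐ x ∂μI, |u x| ≤ ‖f x‖) :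
    Integrable u μI ∧ Good u := by
  have i1 : Integrable u μI := hf.integrable.norm.mono' hu.aestronglyMeasurable hle
  refine ⟨i1, good_of_LlogL hu i1 ?_⟩
  refine Integrable.mono' hf.2 (phi_meas.comp hu.abs).aestronglyMeasurable ?_
  filter_upwards [hle] with x hx
  show |(phi |(u x)|)| ≤ phi ‖f x‖
  rw [abs_of_nonneg (phi_nonneg (abs_nonneg _))]
  exact phi_mono (abs_nonneg _) hx

theorem main_id (f : ℝ → ℂ) (hf : MemLlogL f) :
    (∀ᵐ x : ℝ ∂μI,
      f x - ((Real.pi : ℂ)⁻¹ * (∫ t in Set.Ioo (-1 : ℝ) 1, f t)) *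
          ((Real.sqrt (1 - x ^ 2) : ℂ))⁻¹
        = hatT (FHT f) x) := by
  have hpi : (Real.pi:ℂ) ≠ 0 := by exact_mod_cast Real.pi_ne_zero
  set f0 := hf.1.mk f with hf0
  have hae : f =ᵐ[μI] f0 := hf.1.ae_eq_mk
  have hm0 : Measurable f0 := hf.1.stronglyMeasurable_mk.measurable
  set u : ℝ → ℝ := fun x => (f0 x).re with hu
  set v : ℝ → ℝ := fun x => (f0 x).im with hv
  have hfu : ∀ᵐ x ∂μI, f x = u x + v x * Complex.I := by
    filter_upwards [hae] with x hx
    rw [hx]; exact (Complex.re_add_im _).symm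
  obtain ⟨iu, gu⟩ := good_part hf (u := u) (Complex.measurable_re.comp hm0) (by
    filter_upwards [hae] with x hx; rw [hx]; exact Complex.abs_re_le_norm _)
  obtain ⟨iv, gv⟩ := good_part hf (u := v) (Complex.measurable_im.comp hm0) (by
    filter_upwards [hae] with x hx; rw [hx]; exact Complex.abs_im_le_norm _)
  obtain ⟨Hu, iHu, hHu⟩ := real_core iu gu
  obtain ⟨Hv, iHv, hHv⟩ := real_core iv gv
  have hint : ∫ t in Set.Ioo (-1 : ℝ) 1, f t = ((∫ x, u x ∂μI : ℝ) : ℂ) + ((∫ x, v x ∂μI : ℝ) : ℂ) * Complex.I := by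
    rw [← integral_complex_ofReal, ← integral_complex_ofReal, ← integral_mul_const, ← integral_add iu.ofReal (iv.ofReal.mul_const _)]
    exact integral_congr_ae hfu
  have sq1 : ∀ x, sqw x ≤ 1 := by
    intro x; unfold sqw; rw [Real.sqrt_le_one]; nlinarith [sq_nonneg x]
  have hsi : ∀ w : ℝ → ℝ, Integrable w μI → Integrable (fun x => Real.pi⁻¹ * (sqw x * w x)) μI := fun w hw =>
    (hw.bdd_mul (c := 1) sqw_continuous.aestronglyMeasurable (Eventually.of_forall fun x => by
      rw [Real.norm_eq_abs, abs_of_nonneg (sqw_nonneg x)]; exact sq1 x)).const_mul _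
  have hT : ∀ᵐ t ∂μI, (Real.sqrt (1 - t ^ 2) : ℂ) * FHT f t =
      ((Real.pi⁻¹ * (sqw t * Hu t) : ℝ) : ℂ) + ((Real.pi⁻¹ * (sqw t * Hv t) : ℝ) : ℂ) * Complex.I := by
    filter_upwards [hHu, hHv] with t h1 h2
    rw [FHT_lim iu iv hfu h1.1 h2.1, show Real.sqrt (1 - t^2) = sqw t from rfl]
    push_cast; ring
  filter_upwards [hHu, hHv, hfu, ae_μI (p := fun t => t ∈ Ioo (-1:ℝ) 1) fun t ht => ht] with t h1 h2 h3 ht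
  have hs : 0 < sqw t := Real.sqrt_pos.mpr (by nlinarith [ht.1, ht.2])
  have hs' : (sqw t : ℂ) ≠ 0 := by exact_mod_cast hs.ne'
  unfold hatT
  have k1 := (h1.2.const_mul Real.pi⁻¹).congr fun ε => (trunc_smul Real.pi⁻¹ ε _ t).symm
  have k2 := (h2.2.const_mul Real.pi⁻¹).congr fun ε => (trunc_smul Real.pi⁻¹ ε _ t).symm
  rw [FHT_lim (hsi Hu iHu) (hsi Hv iHv) hT k1 k2, hint, h3, show Real.sqrt (1 - t^2) = sqw t from rfl]
  push_cast
  field_simp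
  ring

lemma phi_mul {c s : ℝ} (hc : 0 ≤ c) (hs : 0 ≤ s) : phi (c * s) ≤ c * max (Real.log c) 0 * s + c * phi s := by
  rcases eq_or_lt_of_le hc with h | hc
  · rw [← h]; simp [phi]
  rcases eq_or_lt_of_le hs with h | hs
  · rw [← h]; simp [phi]
  unfold phi
  rw [Real.log_mul hc.ne' hs.ne']
  have h1 : max (Real.log c + Real.log s) 0 ≤ max (Real.log c) 0 + max (Real.log s) 0 := by
    apply max_le
    · exact add_le_add (le_max_left _ _) (le_max_left _ _)
    · exact add_nonneg (le_max_right _ _) (le_max_right _ _)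
  have := mul_le_mul_of_nonneg_left h1 (mul_pos hc hs).le
  nlinarith

lemma phi_add {a b : ℝ} (ha : 0 ≤ a) (hb : 0 ≤ b) : phi (a + b) ≤ phi (2 * a) + phi (2 * b) := by
  rcases le_total a b with h | h
  · have := phi_mono (add_nonneg ha hb) (show a + b ≤ 2 * b by linarith)
    have := phi_nonneg (show 0 ≤ 2 * a by linarith)
    linarith
  · have := phi_mono (add_nonneg ha hb) (show a + b ≤ 2 * a by linarith)
    have := phi_nonneg (show 0 ≤ 2 * b by linarith)
    linarith

lemma MemLlogL.comb {f g h : ℝ → ℂ} (hf : MemLlogL f) (hg : MemLlogL g) (hh : AEStronglyMeasurable h μI)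
    {b : ℝ} (hb : 0 ≤ b) (hle : ∀ᵐ x ∂μI, ‖h x‖ ≤ ‖f x‖ + b * ‖g x‖) : MemLlogL h := by
  have fi := hf.integrable.norm
  have gi := hg.integrable.norm
  have fp : Integrable (fun x => phi ‖f x‖) μI := hf.2
  have gp : Integrable (fun x => phi ‖g x‖) μI := hg.2
  refine ⟨hh, ?_⟩
  refine Integrable.mono' (((fi.const_mul (2 * max (Real.log 2) 0)).add (fp.const_mul 2)).add
    ((gi.const_mul (2 * b * max (Real.log (2*b)) 0)).add (gp.const_mul (2*b))))
    (phi_meas.comp_aemeasurable hh.norm.aemeasurable).aestronglyMeasurable ?_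
  filter_upwards [hle] with x hx
  show |(phi ‖h x‖)| ≤ (2 * max (Real.log 2) 0 * ‖f x‖ + 2 * phi ‖f x‖) + (2 * b * max (Real.log (2*b)) 0 * ‖g x‖ + 2 * b * phi ‖g x‖)
  rw [abs_of_nonneg (phi_nonneg (norm_nonneg _))]
  refine (phi_mono (norm_nonneg _) hx).trans ((phi_add (norm_nonneg _) (by positivity)).trans ?_)
  rw [← mul_assoc 2 b]
  exact add_le_add (phi_mul (by norm_num) (norm_nonneg _)) (phi_mul (by positivity) (norm_nonneg _))

def Wf (x : ℝ) : ℂ := ((Real.sqrt (1 - x ^ 2) : ℂ))⁻¹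

lemma Wf_meas : Measurable Wf := by
  unfold Wf
  exact (Complex.measurable_ofReal.comp (by fun_prop)).inv

lemma rpow_int (c : ℝ) (hc : -1 < c) : IntegrableOn (fun t : ℝ => t ^ c) (Ioo 0 2) := by
  have := intervalIntegral.intervalIntegrable_rpow' (a := 0) (b := 2) hc
  rw [intervalIntegrable_iff_integrableOn_Ioo_of_le (by norm_num)] at this
  exact this

lemma Wf_mem : MemLlogL Wf := by
  refine ⟨Wf_meas.aestronglyMeasurable, ?_⟩
  have h0 := intervalIntegral.intervalIntegrable_rpow' (a := 0) (b := 2) (r := -(3/4)) (by norm_num)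
  have h1 : IntegrableOn (fun x : ℝ => (x + 1) ^ (-(3/4:ℝ))) (Ioo (-1:ℝ) 1) := by
    have := h0.comp_add_right 1
    norm_num at this
    rw [intervalIntegrable_iff_integrableOn_Ioo_of_le (by norm_num)] at this
    convert this using 3 <;> norm_num
  have h2 : IntegrableOn (fun x : ℝ => (1 - x) ^ (-(3/4:ℝ))) (Ioo (-1:ℝ) 1) := by
    have := (h0.comp_sub_left 1).symm
    norm_num at this
    rw [intervalIntegrable_iff_integrableOn_Ioo_of_le (by norm_num)] at this
    convert this using 3 <;> norm_num
  refine Integrable.mono' ((h1.add h2).const_mul 2) (phi_meas.comp Wf_meas.norm).aestronglyMeasurable ?_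
  refine ae_μI fun x hx => ?_
  have hp1 : 0 < x + 1 := by linarith [hx.1]
  have hp2 : 0 < 1 - x := by linarith [hx.2]
  show |(phi ‖Wf x‖)| ≤ 2 * ((x + 1) ^ (-(3/4:ℝ)) + (1 - x) ^ (-(3/4:ℝ)))
  rw [abs_of_nonneg (phi_nonneg (norm_nonneg _))]
  have hd : 0 < 1 - x^2 := by nlinarith
  have e : ‖Wf x‖ = (1 - x^2) ^ (-(1/2:ℝ)) := by
    unfold Wf
    rw [norm_inv, Complex.norm_real, Real.norm_eq_abs, abs_of_nonneg (Real.sqrt_nonneg _), Real.sqrt_eq_rpow, Real.rpow_neg hd.le]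
  have hy : 0 < ‖Wf x‖ := by rw [e]; positivity
  have hlog : max (Real.log ‖Wf x‖) 0 ≤ 2 * ‖Wf x‖ ^ (1/2:ℝ) := by
    apply max_le
    · have := Real.log_le_rpow_div hy.le (show (0:ℝ) < 1/2 by norm_num)
      linarith
    · positivity
  have e2 : ‖Wf x‖ * ‖Wf x‖ ^ (1/2:ℝ) = (1 - x^2) ^ (-(3/4:ℝ)) := by
    rw [e, ← Real.rpow_mul hd.le, ← Real.rpow_add hd]; norm_num
  have k1 : phi ‖Wf x‖ ≤ 2 * (1 - x^2) ^ (-(3/4:ℝ)) := by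
    rw [← e2]; unfold phi
    have := mul_le_mul_of_nonneg_left hlog hy.le
    linarith
  refine k1.trans ?_
  have q1 : 0 ≤ (x + 1) ^ (-(3/4:ℝ)) := by positivity
  have q2 : 0 ≤ (1 - x) ^ (-(3/4:ℝ)) := by positivity
  rcases le_total 0 x with h | h
  · have : (1 - x^2) ^ (-(3/4:ℝ)) ≤ (1 - x) ^ (-(3/4:ℝ)) := Real.rpow_le_rpow_of_nonpos hp2 (by nlinarith) (by norm_num)
    linarith
  · have : (1 - x^2) ^ (-(3/4:ℝ)) ≤ (x + 1) ^ (-(3/4:ℝ)) := Real.rpow_le_rpow_of_nonpos hp1 (by nlinarith) (by norm_num)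
    linarith

lemma distFun_congr {f g : ℝ → ℂ} (h : f =ᵐ[μI] g) : distFun f = distFun g := by
  ext lam
  unfold distFun
  congr 1
  have hs : MeasurableSet (Ioo (-1:ℝ) 1) := measurableSet_Ioo
  have e := (ae_restrict_iff' hs).mp h
  apply measure_congr
  filter_upwards [e] with x hx
  apply propext
  constructor
  · rintro ⟨h1, h2⟩; exact ⟨h1, by rw [← hx h1]; exact h2⟩
  · rintro ⟨h1, h2⟩; exact ⟨h1, by rw [hx h1]; exact h2⟩

lemma decRearr_congr {f g : ℝ → ℂ} (h : f =ᵐ[μI] g) : decRearr f = decRearr g := by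
  ext t; unfold decRearr; rw [distFun_congr h]

lemma llogLNorm_congr {f g : ℝ → ℂ} (h : f =ᵐ[μI] g) : llogLNorm f = llogLNorm g := by
  unfold llogLNorm; rw [decRearr_congr h]

lemma distFun_eq {f : ℝ → ℂ} (hm : Measurable f) (a : ℝ) : distFun f a = μI.real {x | a < ‖f x‖} := by
  unfold distFun μI Measure.real
  rw [Measure.restrict_apply (measurableSet_lt measurable_const hm.norm), inter_comm]; rfl

lemma distFun_anti {f : ℝ → ℂ} (hm : Measurable f) : Antitone (distFun f) := by
  intro a b h
  rw [distFun_eq hm, distFun_eq hm]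
  exact measureReal_mono fun x hx => lt_of_le_of_lt h hx

lemma distFun_le {f : ℝ → ℂ} (hm : Measurable f) (a : ℝ) : distFun f a ≤ 2 := by
  rw [distFun_eq hm, ← μI_univ]
  exact measureReal_mono (subset_univ _)

lemma distFun_nonneg (f : ℝ → ℂ) (a : ℝ) : 0 ≤ distFun f a := ENNReal.toReal_nonneg

lemma distFun_rc {f : ℝ → ℂ} (hm : Measurable f) {a t : ℝ} (h : ∀ b > a, distFun f b ≤ t) : distFun f a ≤ t := by
  have hU : {x | a < ‖f x‖} = ⋃ n : ℕ, {x | a + es n < ‖f x‖} := by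
    ext x
    simp only [mem_setOf_eq, mem_iUnion]
    constructor
    · intro hx
      have h1 := es_tendsto.mono_right nhdsWithin_le_nhds
      obtain ⟨n, hn⟩ := ((tendsto_order.mp h1).2 (‖f x‖ - a) (by linarith)).exists
      exact ⟨n, by linarith⟩
    · rintro ⟨n, hn⟩; linarith [es_pos n]
  have hmono : Monotone fun n : ℕ => {x | a + es n < ‖f x‖} := by
    intro n m hnm x hx
    have : es m ≤ es n := by unfold es; gcongr
    simp only [mem_setOf_eq] at hx ⊢; linarith
  have ht := tendsto_measure_iUnion_atTop (μ := μI) hmono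
  rw [← hU] at ht
  have ht2 := (ENNReal.tendsto_toReal (measure_ne_top μI _)).comp ht
  rw [distFun_eq hm]
  refine le_of_tendsto ht2 (Eventually.of_forall fun n => ?_)
  have := h (a + es n) (by linarith [es_pos n])
  rw [distFun_eq hm] at this
  exact this

lemma distFun_small {f : ℝ → ℂ} (hm : Measurable f) (hf : Integrable f μI) {t : ℝ} (ht : 0 < t) :
    ∃ a : ℝ, 0 ≤ a ∧ distFun f a ≤ t := by
  have hI : 0 ≤ ∫ x, ‖f x‖ ∂μI := integral_nonneg fun x => norm_nonneg _
  set a := (∫ x, ‖f x‖ ∂μI) / t + 1 with ha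
  have hap : 0 < a := by positivity
  refine ⟨a, hap.le, ?_⟩
  have h1 := mul_meas_ge_le_integral_of_nonneg (μ := μI) (Eventually.of_forall fun x => norm_nonneg (f x)) hf.norm a
  have h2 : distFun f a ≤ μI.real {x | a ≤ ‖f x‖} := by
    rw [distFun_eq hm]; exact measureReal_mono fun x (hx : a < ‖f x‖) => (show a ≤ ‖f x‖ from hx.le)
  have h3 : a * distFun f a ≤ ∫ x, ‖f x‖ ∂μI := le_trans (mul_le_mul_of_nonneg_left h2 hap.le) h1
  have h4 : ∫ x, ‖f x‖ ∂μI ≤ a * t := by rw [ha, add_mul, div_mul_cancel₀ _ ht.ne']; linarith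
  exact le_of_mul_le_mul_left (h3.trans h4) hap

lemma decRearr_nonneg (f : ℝ → ℂ) (t : ℝ) : 0 ≤ decRearr f t := Real.sInf_nonneg fun _ h => h.1

lemma decRearr_bdd (f : ℝ → ℂ) (t : ℝ) : BddBelow {lam : ℝ | 0 ≤ lam ∧ distFun f lam ≤ t} := ⟨0, fun _ h => h.1⟩

lemma decRearr_le_iff {f : ℝ → ℂ} (hm : Measurable f) (hf : Integrable f μI) {t a : ℝ} (ht : 0 < t) (ha : 0 ≤ a) :
    decRearr f t ≤ a ↔ distFun f a ≤ t := by
  constructor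
  · intro h
    apply distFun_rc hm
    intro b hb
    obtain ⟨c, hc, hcb⟩ := exists_lt_of_csInf_lt (distFun_small hm hf ht) (lt_of_le_of_lt h hb)
    exact (distFun_anti hm hcb.le).trans hc.2
  · intro h; exact csInf_le (decRearr_bdd f t) ⟨ha, h⟩

lemma decRearr_anti {f : ℝ → ℂ} (hm : Measurable f) (hf : Integrable f μI) : AntitoneOn (decRearr f) (Ioi 0) := by
  intro s hs t ht hst
  exact csInf_le_csInf (decRearr_bdd f t) (distFun_small hm hf hs) fun a ha => ⟨ha.1, ha.2.trans hst⟩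

def nu2 : Measure ℝ := volume.restrict (Ioo (0:ℝ) 2)
instance : IsFiniteMeasure nu2 := by unfold nu2; infer_instance

lemma decRearr_meas {f : ℝ → ℂ} (hm : Measurable f) (hf : Integrable f μI) : AEMeasurable (decRearr f) nu2 :=
  aemeasurable_restrict_of_antitoneOn measurableSet_Ioo ((decRearr_anti hm hf).mono fun _ h => h.1)

lemma equi {f : ℝ → ℂ} (hm : Measurable f) (hf : Integrable f μI) :
    Measure.map (decRearr f) nu2 = Measure.map (fun x => ‖f x‖) μI := by
  have hd := decRearr_meas hm hf
  haveI : IsFiniteMeasure (Measure.map (decRearr f) nu2) := by infer_instance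
  apply Measure.ext_of_Iic
  intro a
  rw [Measure.map_apply_of_aemeasurable hd measurableSet_Iic, Measure.map_apply hm.norm measurableSet_Iic]
  rcases lt_or_ge a 0 with ha | ha
  · have e1 : decRearr f ⁻¹' Iic a = ∅ := by
      ext t; simp only [mem_preimage, mem_Iic, mem_empty_iff_false, iff_false, not_le]
      linarith [decRearr_nonneg f t]
    have e2 : (fun x => ‖f x‖) ⁻¹' Iic a = ∅ := by
      ext t; simp only [mem_preimage, mem_Iic, mem_empty_iff_false, iff_false, not_le]
      linarith [norm_nonneg (f t)]
    rw [e1, e2]; simp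
  · have d0 := distFun_nonneg f a
    have e1 : nu2 (decRearr f ⁻¹' Iic a) = ENNReal.ofReal (2 - distFun f a) := by
      unfold nu2
      rw [Measure.restrict_apply' measurableSet_Ioo]
      apply le_antisymm
      · rw [← Real.volume_Icc]
        apply measure_mono
        rintro t ⟨h1, h2⟩
        exact ⟨(decRearr_le_iff hm hf h2.1 ha).mp h1, h2.2.le⟩
      · rw [← Real.volume_Ioo]
        apply measure_mono
        rintro t ⟨h1, h2⟩
        have : 0 < t := lt_of_le_of_lt d0 h1
        exact ⟨(decRearr_le_iff hm hf this ha).mpr h1.le, this, h2⟩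
    have e2 : μI ((fun x => ‖f x‖) ⁻¹' Iic a) = ENNReal.ofReal (2 - distFun f a) := by
      have hms : MeasurableSet {x | a < ‖f x‖} := measurableSet_lt measurable_const hm.norm
      have e3 : (fun x => ‖f x‖) ⁻¹' Iic a = {x | a < ‖f x‖}ᶜ := by
        ext x; simp
      rw [e3, ← ENNReal.ofReal_toReal (measure_ne_top μI _)]
      congr 1
      rw [distFun_eq hm, ← μI_univ]
      exact measureReal_compl hms
    rw [e1, e2]

lemma equi_int {f : ℝ → ℂ} (hm : Measurable f) (hf : Integrable f μI) {Φ : ℝ → ℝ} (hΦ : Measurable Φ)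
    (hi : Integrable (fun x => Φ ‖f x‖) μI) :
    Integrable (fun t => Φ (decRearr f t)) nu2 ∧ ∫ t, Φ (decRearr f t) ∂nu2 = ∫ x, Φ ‖f x‖ ∂μI := by
  have hd := decRearr_meas hm hf
  constructor
  · have h1 : Integrable Φ (Measure.map (fun x => ‖f x‖) μI) :=
      (integrable_map_measure hΦ.aestronglyMeasurable hm.norm.aemeasurable).mpr hi
    rw [← equi hm hf] at h1
    exact (integrable_map_measure hΦ.aestronglyMeasurable hd).mp h1
  · rw [← integral_map hd hΦ.aestronglyMeasurable, equi hm hf, integral_map hm.norm.aemeasurable hΦ.aestronglyMeasurable]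

lemma dec_int {f : ℝ → ℂ} (hm : Measurable f) (hf : Integrable f μI) :
    Integrable (decRearr f) nu2 ∧ ∫ t, decRearr f t ∂nu2 = ∫ x, ‖f x‖ ∂μI :=
  equi_int hm hf measurable_id hf.norm

def Kf (f : ℝ → ℂ) (s : ℝ) : ℝ := ∫ t in Ioo 0 s, decRearr f t

lemma dec_intOn {f : ℝ → ℂ} (hm : Measurable f) (hf : Integrable f μI) {s : ℝ} (hs : s ≤ 2) :
    IntegrableOn (decRearr f) (Ioo 0 s) :=
  IntegrableOn.mono_set (dec_int hm hf).1 (Ioo_subset_Ioo_right hs)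

lemma pos_int {f : ℝ → ℂ} (hf : Integrable f μI) (a : ℝ) : Integrable (fun x => max (‖f x‖ - a) 0) μI :=
  (hf.norm.sub (integrable_const a)).pos_part

lemma Kf_le {f : ℝ → ℂ} (hm : Measurable f) (hf : Integrable f μI) {s : ℝ} (h0 : 0 < s) (hs : s ≤ 2) (a : ℝ) :
    Kf f s ≤ s * a + ∫ x, max (‖f x‖ - a) 0 ∂μI := by
  obtain ⟨i1, e1⟩ := equi_int hm hf (Φ := fun y => max (y - a) 0) (by fun_prop) (pos_int hf a)
  have hi := dec_intOn hm hf hs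
  have i2 : IntegrableOn (fun t => max (decRearr f t - a) 0) (Ioo 0 s) := IntegrableOn.mono_set i1 (Ioo_subset_Ioo_right hs)
  have ic : IntegrableOn (fun _ : ℝ => a) (Ioo 0 s) := integrableOn_const (by simp)
  have hvol : volume.real (Ioo 0 s) = s := by rw [Measure.real, Real.volume_Ioo, ENNReal.toReal_ofReal (by linarith)]; ring
  rw [← e1]
  unfold Kf
  calc ∫ t in Ioo 0 s, decRearr f t ≤ ∫ t in Ioo 0 s, (a + max (decRearr f t - a) 0) := by
        apply integral_mono hi (ic.add i2)
        intro t
        show decRearr f t ≤ a + max (decRearr f t - a) 0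
        linarith [le_max_left (decRearr f t - a) 0]
    _ = s * a + ∫ t in Ioo 0 s, max (decRearr f t - a) 0 := by
        rw [integral_add ic i2, setIntegral_const, hvol, smul_eq_mul]
    _ ≤ _ := by
        have h9 : ∫ t in Ioo 0 s, max (decRearr f t - a) 0 ≤ ∫ t, max (decRearr f t - a) 0 ∂nu2 :=
          setIntegral_mono_set i1 (Eventually.of_forall fun t => le_max_right _ _) (Ioo_subset_Ioo_right hs).eventuallyLE
        linarith

lemma Kf_eq {f : ℝ → ℂ} (hm : Measurable f) (hf : Integrable f μI) {s : ℝ} (h0 : 0 < s) (hs : s < 2) :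
    Kf f s = s * decRearr f s + ∫ x, max (‖f x‖ - decRearr f s) 0 ∂μI := by
  set a := decRearr f s with ha
  obtain ⟨i1, e1⟩ := equi_int hm hf (Φ := fun y => max (y - a) 0) (by fun_prop) (pos_int hf a)
  have hi := dec_intOn hm hf hs.le
  have ic : IntegrableOn (fun _ : ℝ => a) (Ioo 0 s) := integrableOn_const (by simp)
  have hvol : volume.real (Ioo 0 s) = s := by rw [Measure.real, Real.volume_Ioo, ENNReal.toReal_ofReal (by linarith)]; ring
  have hanti := decRearr_anti hm hf
  rw [← e1]
  have e2 : ∫ t, max (decRearr f t - a) 0 ∂nu2 = ∫ t in Ioo 0 s, (decRearr f t - a) := by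
    unfold nu2
    have : ∫ t in Ioo 0 s, (decRearr f t - a) = ∫ t in Ioo 0 s, max (decRearr f t - a) 0 := by
      apply setIntegral_congr_fun measurableSet_Ioo
      intro t ht
      show _ = max _ _
      rw [max_eq_left]
      linarith [hanti (mem_Ioi.mpr ht.1) (mem_Ioi.mpr h0) ht.2.le]
    rw [this]
    apply setIntegral_eq_of_subset_of_forall_sdiff_eq_zero measurableSet_Ioo (Ioo_subset_Ioo_right hs.le)
    rintro t ⟨h1, h2⟩
    apply max_eq_right
    have : s ≤ t := by
      by_contra h; exact h2 ⟨h1.1, not_le.mp h⟩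
    linarith [hanti (mem_Ioi.mpr h0) (mem_Ioi.mpr h1.1) this]
  rw [e2, integral_sub hi ic, setIntegral_const, hvol, smul_eq_mul]
  unfold Kf; ring

lemma Kf_comb {f g h : ℝ → ℂ} (fm : Measurable f) (fi : Integrable f μI) (gm : Measurable g) (gi : Integrable g μI)
    (hm : Measurable h) (hi : Integrable h μI) {b : ℝ} (hb : 0 ≤ b) (hle : ∀ x, ‖h x‖ ≤ ‖f x‖ + b * ‖g x‖)
    {s : ℝ} (h0 : 0 < s) (hs : s < 2) : Kf h s ≤ Kf f s + b * Kf g s := by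
  rw [Kf_eq fm fi h0 hs, Kf_eq gm gi h0 hs]
  set p := decRearr f s
  set q := decRearr g s
  refine (Kf_le hm hi h0 hs.le (p + b * q)).trans ?_
  have : ∫ x, max (‖h x‖ - (p + b * q)) 0 ∂μI ≤ ∫ x, (max (‖f x‖ - p) 0 + b * max (‖g x‖ - q) 0) ∂μI := by
    apply integral_mono (pos_int hi _) ((pos_int fi p).add ((pos_int gi q).const_mul b))
    intro x
    show max (‖h x‖ - (p + b * q)) 0 ≤ max (‖f x‖ - p) 0 + b * max (‖g x‖ - q) 0
    have h1 := le_max_left (‖f x‖ - p) 0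
    have h2 := mul_le_mul_of_nonneg_left (le_max_left (‖g x‖ - q) 0) hb
    apply max_le
    · linarith [hle x]
    · have := le_max_right (‖f x‖ - p) 0
      have := mul_nonneg hb (le_max_right (‖g x‖ - q) 0)
      linarith
  rw [integral_add (pos_int fi p) ((pos_int gi q).const_mul b), integral_const_mul] at this
  linarith

def wlog (t : ℝ) : ℝ := Real.log (2 * Real.exp 1 / t)

lemma wlog_eq {t : ℝ} (h0 : 0 < t) : wlog t = 1 + (Real.log 2 - Real.log t) := by
  unfold wlog
  rw [Real.log_div (by positivity) h0.ne', Real.log_mul (by norm_num) (by positivity), Real.log_exp]; ring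

lemma wlog_ge {t : ℝ} (ht : t ∈ Ioo (0:ℝ) 2) : 1 ≤ wlog t := by
  rw [wlog_eq ht.1]
  linarith [Real.log_le_log ht.1 ht.2.le]

lemma wlog_meas : Measurable wlog := by unfold wlog; fun_prop

def Lf (f : ℝ → ℂ) : ENNReal := ∫⁻ t, ENNReal.ofReal (decRearr f t) * ENNReal.ofReal (wlog t) ∂nu2

lemma norm_eq_Lf {f : ℝ → ℂ} (hm : Measurable f) (hf : Integrable f μI) : llogLNorm f = (Lf f).toReal := by
  unfold llogLNorm
  change ∫ t, decRearr f t * wlog t ∂nu2 = _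
  rw [integral_eq_lintegral_of_nonneg_ae]
  · congr 1
    unfold Lf
    apply lintegral_congr
    intro t
    exact ENNReal.ofReal_mul (decRearr_nonneg f t)
  · filter_upwards [ae_restrict_mem (μ := volume) measurableSet_Ioo] with t ht
    exact mul_nonneg (decRearr_nonneg f t) (by linarith [wlog_ge ht])
  · exact ((decRearr_meas hm hf).mul wlog_meas.aemeasurable).aestronglyMeasurable

lemma wlog_lint {t : ℝ} (ht : t ∈ Ioo (0:ℝ) 2) :
    ENNReal.ofReal (wlog t) = 1 + ∫⁻ s, (Ioi t).indicator (fun s => ENNReal.ofReal (1/s)) s ∂nu2 := by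
  have h1 : ∫⁻ s, (Ioi t).indicator (fun s => ENNReal.ofReal (1/s)) s ∂nu2
      = ENNReal.ofReal (Real.log 2 - Real.log t) := by
    rw [lintegral_indicator measurableSet_Ioi]
    unfold nu2
    rw [Measure.restrict_restrict measurableSet_Ioi]
    have e : Ioi t ∩ Ioo 0 2 = Ioo t 2 := by
      ext s; simp only [mem_inter_iff, mem_Ioi, mem_Ioo]
      constructor
      · rintro ⟨a, b, c⟩; exact ⟨a, c⟩
      · rintro ⟨a, c⟩; exact ⟨a, ht.1.trans a, c⟩
    rw [e]
    have hii : IntervalIntegrable (fun s : ℝ => 1/s) volume t 2 := by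
      apply intervalIntegral.intervalIntegrable_one_div
      · intro x hx
        rw [uIcc_of_le ht.2.le] at hx
        linarith [hx.1, ht.1]
      · fun_prop
    have hi : IntegrableOn (fun s : ℝ => 1/s) (Ioo t 2) :=
      ((intervalIntegrable_iff_integrableOn_Ioc_of_le ht.2.le).1 hii).mono_set Ioo_subset_Ioc_self
    rw [← ofReal_integral_eq_lintegral_ofReal hi]
    · congr 1
      rw [← integral_Ioc_eq_integral_Ioo, ← intervalIntegral.integral_of_le ht.2.le, integral_one_div_of_pos ht.1 (by norm_num),
        Real.log_div (by norm_num) ht.1.ne']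
    · filter_upwards [ae_restrict_mem (μ := volume) measurableSet_Ioo] with s hs
      have : 0 < s := ht.1.trans hs.1
      show (0:ℝ) ≤ 1/s
      positivity
  rw [h1, wlog_eq ht.1, ENNReal.ofReal_add (by norm_num) (by linarith [Real.log_le_log ht.1 ht.2.le]), ENNReal.ofReal_one]

lemma Kf_lint {f : ℝ → ℂ} (hm : Measurable f) (hf : Integrable f μI) {s : ℝ} (hs : s ≤ 2) :
    ∫⁻ t, (Iio s).indicator (fun t => ENNReal.ofReal (decRearr f t)) t ∂nu2 = ENNReal.ofReal (Kf f s) := by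
  rw [lintegral_indicator measurableSet_Iio]
  unfold nu2
  rw [Measure.restrict_restrict measurableSet_Iio]
  have e : Iio s ∩ Ioo 0 2 = Ioo 0 s := by
    ext t; simp only [mem_inter_iff, mem_Iio, mem_Ioo]
    constructor
    · rintro ⟨a, b, c⟩; exact ⟨b, a⟩
    · rintro ⟨a, c⟩; exact ⟨c, a, c.trans_le hs⟩
  rw [e]
  unfold Kf
  rw [ofReal_integral_eq_lintegral_ofReal (dec_intOn hm hf hs) (Eventually.of_forall fun t => decRearr_nonneg f t)]

instance : SFinite nu2 := by unfold nu2; infer_instance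

lemma Lf_eq {f : ℝ → ℂ} (hm : Measurable f) (hf : Integrable f μI) :
    Lf f = ENNReal.ofReal (∫ x, ‖f x‖ ∂μI) + ∫⁻ s, ENNReal.ofReal (1/s) * ENNReal.ofReal (Kf f s) ∂nu2 := by
  have hd := decRearr_meas hm hf
  have hmem : ∀ᵐ t ∂nu2, t ∈ Ioo (0:ℝ) 2 := ae_restrict_mem measurableSet_Ioo
  have s1 : Lf f = ∫⁻ t, (ENNReal.ofReal (decRearr f t) + ∫⁻ s, (Ioi t).indicator (fun s => ENNReal.ofReal (1/s)) s * ENNReal.ofReal (decRearr f t) ∂nu2) ∂nu2 := by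
    unfold Lf
    apply lintegral_congr_ae
    filter_upwards [hmem] with t ht
    rw [wlog_lint ht, mul_add, mul_one, lintegral_mul_const _ ((by fun_prop : Measurable fun s : ℝ => ENNReal.ofReal (1/s)).indicator measurableSet_Ioi), mul_comm]
  rw [s1, lintegral_add_left' hd.ennreal_ofReal]
  congr 1
  · rw [← (dec_int hm hf).2, ofReal_integral_eq_lintegral_ofReal (dec_int hm hf).1 (Eventually.of_forall fun t => decRearr_nonneg f t)]
  · rw [lintegral_lintegral_swap]
    · apply lintegral_congr_ae
      filter_upwards [hmem] with s hs
      rw [← Kf_lint hm hf hs.2.le, ← lintegral_const_mul'' _ (hd.ennreal_ofReal.indicator measurableSet_Iio)]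
      apply lintegral_congr
      intro t
      by_cases h : t < s
      · rw [indicator_of_mem (mem_Ioi.mpr h), indicator_of_mem (mem_Iio.mpr h)]
      · rw [indicator_of_notMem (by simpa using h), indicator_of_notMem (by simpa using h)]; simp
    · have m1 : Measurable (fun p : ℝ × ℝ => ({p : ℝ × ℝ | p.1 < p.2}).indicator (fun p => ENNReal.ofReal (1/p.2)) p) :=
        Measurable.indicator (by fun_prop) (measurableSet_lt measurable_fst measurable_snd)
      have m2 : AEMeasurable (fun p : ℝ × ℝ => ENNReal.ofReal (decRearr f p.1)) (nu2.prod nu2) :=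
        hd.ennreal_ofReal.comp_fst
      exact m1.aemeasurable.mul m2

lemma Lf_comb {f g h : ℝ → ℂ} (fm : Measurable f) (fi : Integrable f μI) (gm : Measurable g) (gi : Integrable g μI)
    (hm : Measurable h) (hi : Integrable h μI) {b : ℝ} (hb : 0 ≤ b) (hle : ∀ x, ‖h x‖ ≤ ‖f x‖ + b * ‖g x‖) :
    Lf h ≤ Lf f + ENNReal.ofReal b * Lf g := by
  have hmem : ∀ᵐ t ∂nu2, t ∈ Ioo (0:ℝ) 2 := ae_restrict_mem measurableSet_Ioo
  have k0 : ∀ (u : ℝ → ℂ) (s : ℝ), 0 ≤ Kf u s := fun u s => integral_nonneg fun t => decRearr_nonneg u t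
  have n0 : ∀ (u : ℝ → ℂ), 0 ≤ ∫ x, ‖u x‖ ∂μI := fun u => integral_nonneg fun t => norm_nonneg _
  rw [Lf_eq fm fi, Lf_eq gm gi, Lf_eq hm hi]
  have a1 : ENNReal.ofReal (∫ x, ‖h x‖ ∂μI) ≤ ENNReal.ofReal (∫ x, ‖f x‖ ∂μI) + ENNReal.ofReal b * ENNReal.ofReal (∫ x, ‖g x‖ ∂μI) := by
    rw [← ENNReal.ofReal_mul hb, ← ENNReal.ofReal_add (n0 f) (mul_nonneg hb (n0 g))]
    apply ENNReal.ofReal_le_ofReal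
    rw [← integral_const_mul, ← integral_add fi.norm (gi.norm.const_mul b)]
    exact integral_mono hi.norm (fi.norm.add (gi.norm.const_mul b)) hle
  have hKm : ∀ {u : ℝ → ℂ}, Measurable u → Integrable u μI → AEMeasurable (fun s => ENNReal.ofReal (1/s) * ENNReal.ofReal (Kf u s)) nu2 := by
    intro u um ui
    have mono : Monotone (fun s => Kf u (min s 2)) := by
      intro s s' hss
      have := min_le_min_right 2 hss
      exact setIntegral_mono_set (dec_intOn um ui (min_le_right _ _)) (Eventually.of_forall fun t => decRearr_nonneg u t) (Ioo_subset_Ioo_right this).eventuallyLE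
    have m1 : AEMeasurable (fun s => ENNReal.ofReal (1/s) * ENNReal.ofReal (Kf u (min s 2))) nu2 :=
      (Measurable.mul (by fun_prop) mono.measurable.ennreal_ofReal).aemeasurable
    refine m1.congr ?_
    filter_upwards [hmem] with s hs
    rw [min_eq_left hs.2.le]
  have a2 : ∫⁻ s, ENNReal.ofReal (1/s) * ENNReal.ofReal (Kf h s) ∂nu2 ≤
      ∫⁻ s, ENNReal.ofReal (1/s) * ENNReal.ofReal (Kf f s) ∂nu2 + ENNReal.ofReal b * ∫⁻ s, ENNReal.ofReal (1/s) * ENNReal.ofReal (Kf g s) ∂nu2 := by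
    rw [← lintegral_const_mul'' _ (hKm gm gi), ← lintegral_add_left' (hKm fm fi)]
    apply lintegral_mono_ae
    filter_upwards [hmem] with s hs
    calc _ ≤ ENNReal.ofReal (1/s) * (ENNReal.ofReal (Kf f s) + ENNReal.ofReal b * ENNReal.ofReal (Kf g s)) := by
          apply mul_le_mul_right
          rw [← ENNReal.ofReal_mul hb, ← ENNReal.ofReal_add (k0 f s) (mul_nonneg hb (k0 g s))]
          exact ENNReal.ofReal_le_ofReal (Kf_comb fm fi gm gi hm hi hb hle hs.1 hs.2)
      _ = _ := by ring
  calc _ ≤ _ := add_le_add a1 a2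
    _ = _ := by ring

lemma Lf_fin {f : ℝ → ℂ} (hm : Measurable f) (hf : MemLlogL f) : Lf f < ⊤ := by
  have hfi := hf.integrable
  have hmem : ∀ᵐ t ∂nu2, t ∈ Ioo (0:ℝ) 2 := ae_restrict_mem measurableSet_Ioo
  have hphi : Integrable (fun x => phi ‖f x‖) μI := hf.2
  have i1 := (equi_int hm hfi phi_meas hphi).1
  have i2 := (dec_int hm hfi).1
  have i3 : Integrable (fun t : ℝ => t ^ (-(3/4) : ℝ)) nu2 := rpow_int _ (by norm_num)
  set C := (2 * Real.exp 1) ^ (1/4 : ℝ) / (1/4) with hC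
  have hE : (0:ℝ) < 2 * Real.exp 1 := by positivity
  have hi : Integrable (fun t => C * t ^ (-(3/4) : ℝ) + (Real.log (2 * Real.exp 1) * decRearr f t + 2 * phi (decRearr f t))) nu2 :=
    (i3.const_mul C).add ((i2.const_mul _).add (i1.const_mul 2))
  have hwi : Integrable (fun t => decRearr f t * wlog t) nu2 := by
    apply hi.mono' ((decRearr_meas hm hfi).mul wlog_meas.aemeasurable).aestronglyMeasurable
    filter_upwards [hmem] with t ht
    have hd := decRearr_nonneg f t
    have hw := wlog_ge ht
    have ht0 := ht.1
    change ‖decRearr f t * wlog t‖ ≤ _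
    rw [Real.norm_of_nonneg (mul_nonneg hd (by linarith))]
    set d := decRearr f t
    have hl : 0 ≤ Real.log (2 * Real.exp 1) := by
      apply Real.log_nonneg; nlinarith [Real.add_one_le_exp 1]
    have hp := phi_nonneg hd
    have hr1 : 0 ≤ C * t ^ (-(3/4) : ℝ) := by positivity
    by_cases hc : d ≤ t ^ (-(1/2) : ℝ)
    · have h1 : wlog t ≤ C * t ^ (-(1/4) : ℝ) := by
        unfold wlog
        refine (Real.log_le_rpow_div (by positivity) (by norm_num : (0:ℝ) < 1/4)).trans ?_
        rw [Real.div_rpow hE.le ht0.le, Real.rpow_neg ht0.le, hC]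
        apply le_of_eq; ring
      have h2 : d * wlog t ≤ t ^ (-(1/2) : ℝ) * (C * t ^ (-(1/4) : ℝ)) :=
        mul_le_mul hc h1 (by linarith) (by positivity)
      have h3 : t ^ (-(1/2) : ℝ) * (C * t ^ (-(1/4) : ℝ)) = C * t ^ (-(3/4) : ℝ) := by
        rw [mul_left_comm, ← Real.rpow_add ht0]; norm_num
      have := mul_nonneg hl hd
      linarith
    · push Not at hc
      have hdp : 0 < d := lt_trans (by positivity) hc
      have h1 : -(1/2) * Real.log t ≤ Real.log d := by
        rw [← Real.log_rpow ht0]; exact Real.log_le_log (by positivity) hc.le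
      have h2 : wlog t ≤ Real.log (2 * Real.exp 1) + 2 * max (Real.log d) 0 := by
        unfold wlog
        rw [Real.log_div hE.ne' ht0.ne']
        linarith [le_max_left (Real.log d) 0]
      have h3 := mul_le_mul_of_nonneg_left h2 hd
      have h4 : phi d = d * max (Real.log d) 0 := rfl
      rw [h4]
      nlinarith
  have := hwi.lintegral_lt_top
  refine lt_of_le_of_lt (le_of_eq ?_) this
  unfold Lf
  exact lintegral_congr fun t => (ENNReal.ofReal_mul (decRearr_nonneg f t)).symm

lemma final_norm (f : ℝ → ℂ) (hf : MemLlogL f) (F : ℝ → ℂ)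
    (hF : ∀ᵐ x : ℝ ∂μI,
      f x - ((Real.pi : ℂ)⁻¹ * (∫ t in Set.Ioo (-1 : ℝ) 1, f t)) * ((Real.sqrt (1 - x ^ 2) : ℂ))⁻¹ = F x) :
    MemLlogL F ∧ llogLNorm F ≤ (1 + Real.pi⁻¹ * llogLNorm Wf) * llogLNorm f := by
  set c : ℂ := (Real.pi : ℂ)⁻¹ * (∫ t in Set.Ioo (-1 : ℝ) 1, f t) with hc
  set f0 := hf.1.mk f with hf0
  have e0 : f =ᵐ[μI] f0 := hf.1.ae_eq_mk
  have m0 : Measurable f0 := hf.1.stronglyMeasurable_mk.measurable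
  have L0 : MemLlogL f0 := by
    refine ⟨m0.aestronglyMeasurable, ?_⟩
    refine Integrable.congr hf.2 ?_
    change _ =ᵐ[μI] _
    filter_upwards [e0] with x hx
    rw [hx]
  set h : ℝ → ℂ := fun x => f0 x - c * Wf x with hh
  have mh : Measurable h := m0.sub (Wf_meas.const_mul c)
  have eF : F =ᵐ[μI] h := by
    filter_upwards [e0, hF] with x h1 h2
    rw [← h2, h1]; rfl
  have hle : ∀ x, ‖h x‖ ≤ ‖f0 x‖ + ‖c‖ * ‖Wf x‖ := fun x => by
    rw [← norm_mul]; exact norm_sub_le _ _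
  have Lh : MemLlogL h := MemLlogL.comb L0 Wf_mem mh.aestronglyMeasurable (norm_nonneg c) (Eventually.of_forall hle)
  have LF : MemLlogL F := by
    refine ⟨mh.aestronglyMeasurable.congr eF.symm, ?_⟩
    refine Integrable.congr Lh.2 ?_
    change _ =ᵐ[μI] _
    filter_upwards [eF] with x hx
    rw [hx]
  refine ⟨LF, ?_⟩
  rw [llogLNorm_congr eF, llogLNorm_congr e0]
  have i0 := L0.integrable
  have key := Lf_comb m0 i0 Wf_meas Wf_mem.integrable mh Lh.integrable (norm_nonneg c) hle
  have t0 := Lf_fin m0 L0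
  have tW := Lf_fin Wf_meas Wf_mem
  have n1 : llogLNorm h ≤ llogLNorm f0 + ‖c‖ * llogLNorm Wf := by
    rw [norm_eq_Lf mh Lh.integrable, norm_eq_Lf m0 i0, norm_eq_Lf Wf_meas Wf_mem.integrable]
    have := ENNReal.toReal_mono (ENNReal.add_ne_top.2 ⟨t0.ne, ENNReal.mul_ne_top ENNReal.ofReal_ne_top tW.ne⟩) key
    rwa [ENNReal.toReal_add t0.ne (ENNReal.mul_ne_top ENNReal.ofReal_ne_top tW.ne), ENNReal.toReal_mul,
      ENNReal.toReal_ofReal (norm_nonneg c)] at this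
  have n2 : ∫ x, ‖f0 x‖ ∂μI ≤ llogLNorm f0 := by
    rw [norm_eq_Lf m0 i0]
    refine (ENNReal.ofReal_le_iff_le_toReal t0.ne).1 ?_
    rw [Lf_eq m0 i0]; exact le_self_add
  have n3 : ‖c‖ ≤ Real.pi⁻¹ * llogLNorm f0 := by
    rw [hc, norm_mul, norm_inv, Complex.norm_real, Real.norm_of_nonneg Real.pi_pos.le]
    refine mul_le_mul_of_nonneg_left ?_ (by positivity)
    refine le_trans ?_ n2
    have : ∫ t in Set.Ioo (-1 : ℝ) 1, f t = ∫ t, f0 t ∂μI := integral_congr_ae e0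
    rw [this]
    exact norm_integral_le_integral_norm _
  have n4 : 0 ≤ llogLNorm Wf := by
    rw [norm_eq_Lf Wf_meas Wf_mem.integrable]; exact ENNReal.toReal_nonneg
  nlinarith [mul_le_mul_of_nonneg_right n3 n4]

/-- For `f ∈ L log L(-1,1)`: `f - ((1/π)∫f)·(1-x²)^{-1/2} = T̂(T(f))` a.e.; consequently
`T̂∘T` maps `L log L` into itself with norm at most `1 + (1/π)‖(1-x²)^{-1/2}‖_{L log L}`. -/
theorem hatT_comp_FHT (f : ℝ → ℂ) (hf : MemLlogL f) :
    (∀ᵐ x : ℝ ∂μI,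
      f x - ((Real.pi : ℂ)⁻¹ * (∫ t in Set.Ioo (-1 : ℝ) 1, f t)) *
          ((Real.sqrt (1 - x ^ 2) : ℂ))⁻¹
        = hatT (FHT f) x) ∧
    MemLlogL (hatT (FHT f)) ∧
    llogLNorm (hatT (FHT f))
      ≤ (1 + Real.pi⁻¹ * llogLNorm fun x : ℝ => ((Real.sqrt (1 - x ^ 2) : ℂ))⁻¹) *
          llogLNorm f := by
  exact ⟨main_id f hf, final_norm f hf _ (main_id f hf)⟩
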